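/- arXiv:2009.00936 — 6 statements merged into one kernel-verified Lean document; each statement's English description precedes it below -/
import Mathlib

section
/- Let β > 0, 0 < c ≤ C, C_S > 0, D ∈ (0,1). Let Φ_k : ℝ → ℂ be twice continuously differentiable with Φ_k(t) = 1 for |t| ≤ D, |Φ_k(t)| ≤ 1 for all t, and Φ_k(t) = 0 for |t| > 1. Let Φ : ℝ → ℂ be continuously differentiable, nowhere vanishing, with c(1+t²)^{−β/2} ≤ |Φ(t)| ≤ C(1+t²)^{−β/2} and |Φ'(t)| ≤ C_S(1+t²)^{−(β+1)/2} for all t ∈ ℝ. For h ∈ (0,1] define the deconvolution kernel K(w;h) = (1/2π) ∫_ℝ e^{−itw} Φ_k(t)/Φ(−t/h) dt. Then there exists a constant C' > 0, depending only on c, C_S, β and Φ_k, such that sup_{w∈ℝ} |w·K(w;h)| ≤ C' h^{−β} for all h ∈ (0,1]. In particular |K(w;h)| ≤ C'/(|w| h^{β}) for all w ≠ 0. -/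
/-!
Writing `g t = Φk t / Φ (-t / h)`, the kernel is a rescaled Fourier transform of `g`, so the Fourier
rule for derivatives (an integration by parts) gives `|w| |K(w;h)| ≤ (1/2π) ∫ |g'|`. Here `g` is
`C¹` and vanishes off `[-1, 1]`, and
`g' t = Φk' t / Φ(-t/h) + Φk t Φ'(-t/h) / (h Φ(-t/h)²)`.
With `A = 1 + (t/h)²`, the first term is at most `‖Φk'‖_∞ c⁻¹ A^{β/2} ≲ h^{-β}`, and the second is at
most `C_S c⁻² h⁻¹ A^{(β-1)/2} = C_S c⁻² h^{-β} (h² + t²)^{(β-1)/2}`. The last factor is bounded by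
`|t|^{β-1} + 2^{β/2}`, which does not depend on `h` and is integrable on `[-1, 1]` because `β > 0`.
-/

open MeasureTheory

/-- The deconvolution kernel `K(w;h) = (1/2π) ∫ e^{−itw} Φ_k(t)/Φ(−t/h) dt`. -/
noncomputable def deconvKernel (Φk Φ : ℝ → ℂ) (h w : ℝ) : ℂ :=
  (2 * Real.pi)⁻¹ • ∫ t : ℝ, Complex.exp (-(Complex.I * t * w)) * (Φk t / Φ (-t / h))

lemma integrableOn_abs_rpow {β : ℝ} (hβ : 0 < β) :
    IntegrableOn (fun t : ℝ => |t| ^ (β - 1)) (Set.Icc (-1) 1) := by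
  have h1 : IntervalIntegrable (fun t : ℝ => |t| ^ (β - 1)) volume 0 1 := by
    refine (intervalIntegral.intervalIntegrable_rpow' (r := β - 1) (by linarith)).congr ?_
    intro t ht
    rw [Set.uIoc_of_le zero_le_one] at ht
    simp [abs_of_pos ht.1]
  have h2 : IntervalIntegrable (fun t : ℝ => |t| ^ (β - 1)) volume (-1) 0 := by
    simpa using ((IntervalIntegrable.iff_comp_neg).1 h1).symm
  exact (intervalIntegrable_iff_integrableOn_Icc_of_le (by norm_num)).1 (h2.trans h1)

lemma rpow_scale_eq {h : ℝ} (hh : 0 < h) (t p : ℝ) :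
    (1 + (-t / h) ^ 2) ^ (p / 2) = h ^ (-p) * (h ^ 2 + t ^ 2) ^ (p / 2) := by
  have h1 : 1 + (-t / h) ^ 2 = (h ^ 2)⁻¹ * (h ^ 2 + t ^ 2) := by
    field_simp
  have h2 : ((h ^ 2)⁻¹) ^ (p / 2) = h ^ (-p) := by
    rw [Real.inv_rpow (by positivity), ← Real.rpow_natCast, ← Real.rpow_mul hh.le,
      Real.rpow_neg hh.le]
    congr 2
    push_cast
    ring
  rw [h1, Real.mul_rpow (by positivity) (by positivity), h2]

lemma rpow_scale_le {β h t : ℝ} (hβ : 0 < β) (hh : 0 < h) (hh1 : h ≤ 1) (ht : |t| ≤ 1) :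
    (1 + (-t / h) ^ 2) ^ (β / 2) ≤ h ^ (-β) * 2 ^ (β / 2) := by
  rw [rpow_scale_eq hh]
  have : t ^ 2 ≤ 1 := by rwa [sq_le_one_iff_abs_le_one]
  gcongr
  nlinarith

/-- The weight produced by the derivative of `1 / Φ (-t / h)` is dominated, up to the factor
`h ^ (-β)`, by a locally integrable function independent of `h`. -/
lemma rpow_scale_sub_one_le {β h t : ℝ} (hh : 0 < h) (hh1 : h ≤ 1)
    (ht : |t| ≤ 1) (ht0 : t ≠ 0) :
    h⁻¹ * (1 + (-t / h) ^ 2) ^ ((β - 1) / 2) ≤ h ^ (-β) * (|t| ^ (β - 1) + 2 ^ (β / 2)) := by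
  have h1 : h⁻¹ * h ^ (-(β - 1)) = h ^ (-β) := by
    rw [← Real.rpow_neg_one, ← Real.rpow_add hh]
    ring_nf
  have ht2 : t ^ 2 ≤ 1 := by rwa [sq_le_one_iff_abs_le_one]
  have h2 : (h ^ 2 + t ^ 2) ^ ((β - 1) / 2) ≤ |t| ^ (β - 1) + 2 ^ (β / 2) := by
    -- For `β ≥ 1` the exponent is nonnegative and the base is at most `2`; otherwise `h ^ 2` may
    -- be dropped from the base.
    rcases le_total 1 β with hb | hb
    · calc (h ^ 2 + t ^ 2) ^ ((β - 1) / 2) ≤ 2 ^ ((β - 1) / 2) :=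
            Real.rpow_le_rpow (by positivity) (by nlinarith) (by linarith)
        _ ≤ 2 ^ (β / 2) := Real.rpow_le_rpow_of_exponent_le (by norm_num) (by linarith)
        _ ≤ _ := le_add_of_nonneg_left (by positivity)
    · calc (h ^ 2 + t ^ 2) ^ ((β - 1) / 2) ≤ (|t| ^ 2) ^ ((β - 1) / 2) := by
            rw [sq_abs]
            exact Real.rpow_le_rpow_of_nonpos (by positivity) (by nlinarith) (by linarith)
        _ = |t| ^ (β - 1) := by
            rw [← Real.rpow_natCast, ← Real.rpow_mul (abs_nonneg t)]
            congr 1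
            push_cast
            ring
        _ ≤ _ := le_add_of_nonneg_right (by positivity)
  rw [rpow_scale_eq hh, ← mul_assoc, h1]
  gcongr

/-- Integration by parts on the Fourier side. -/
lemma abs_mul_norm_fourierIntegral_le {g : ℝ → ℂ} (hg : ContDiff ℝ 1 g)
    (hgs : HasCompactSupport g) (w : ℝ) :
    |w| * ‖∫ t : ℝ, Complex.exp (-(Complex.I * t * w)) * g t‖ ≤ ∫ t, ‖deriv g t‖ := by
  have hi : Integrable g := hg.continuous.integrable_of_hasCompactSupport hgs
  have hi' : Integrable (deriv g) :=
    (hg.continuous_deriv le_rfl).integrable_of_hasCompactSupport hgs.deriv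
  have key := congrFun (Real.fourier_deriv hi (hg.differentiable (by norm_num)) hi')
    (w / (2 * Real.pi))
  have hpi : (Real.pi : ℂ) ≠ 0 := by exact_mod_cast Real.pi_ne_zero
  have e : ∀ f : ℝ → ℂ, FourierTransform.fourier f (w / (2 * Real.pi)) =
      ∫ t : ℝ, Complex.exp (-(Complex.I * t * w)) * f t := by
    intro f
    rw [Real.fourier_real_eq_integral_exp_smul]
    congr 1
    ext t
    rw [smul_eq_mul]
    congr 2
    push_cast
    field_simp
  rw [e, e] at key
  have hn : ‖∫ t : ℝ, Complex.exp (-(Complex.I * t * w)) * deriv g t‖ ≤ ∫ t, ‖deriv g t‖ := by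
    refine (norm_integral_le_integral_norm _).trans (le_of_eq ?_)
    congr 1
    ext t
    rw [norm_mul, Complex.norm_exp]
    simp
  rw [key, norm_smul] at hn
  convert hn using 2
  have : (2 * Real.pi * Complex.I * ((w / (2 * Real.pi) : ℝ) : ℂ)) = Complex.I * w := by
    push_cast
    field_simp
  rw [this]
  simp

/-- Pointwise bound on `g'` by `h ^ (-β)` times a function independent of `h`. The point `t = 0`
is excluded since `|t| ^ (β - 1)` takes a junk value there when `β < 1`. -/
lemma norm_deriv_quotient_le {β c C_S M h t : ℝ} (hβ : 0 < β) (hc : 0 < c)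
    {Φk Φ : ℝ → ℂ} (hΦk : Differentiable ℝ Φk) (hΦk_le : ‖Φk t‖ ≤ 1) (hM : ‖deriv Φk t‖ ≤ M)
    (hΦ : Differentiable ℝ Φ) (hΦ0 : ∀ t, Φ t ≠ 0)
    (hlow : ∀ t : ℝ, c * (1 + t ^ 2) ^ (-β / 2) ≤ ‖Φ t‖)
    (hder : ∀ t : ℝ, ‖deriv Φ t‖ ≤ C_S * (1 + t ^ 2) ^ (-(β + 1) / 2))
    (hCS : 0 < C_S) (hh : 0 < h) (hh1 : h ≤ 1) (ht : |t| ≤ 1) (ht0 : t ≠ 0) :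
    ‖deriv (fun t : ℝ => Φk t / Φ (-t / h)) t‖ ≤
      h ^ (-β) * (M * c⁻¹ * 2 ^ (β / 2) + C_S * c⁻¹ ^ 2 * (|t| ^ (β - 1) + 2 ^ (β / 2))) := by
  have hin : HasDerivAt (fun t : ℝ => -t / h) (-1 / h) t := (hasDerivAt_id t).neg.div_const h
  have hΦd : HasDerivAt (fun t : ℝ => Φ (-t / h)) ((-1 / h : ℝ) • deriv Φ (-t / h)) t :=
    (hΦ (-t / h)).hasDerivAt.scomp t hin
  have hd := (hΦk t).hasDerivAt.div hΦd (hΦ0 _)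
  have hd' : deriv (fun t : ℝ => Φk t / Φ (-t / h)) t =
      deriv Φk t * (Φ (-t / h))⁻¹ +
        Φk t * ((h⁻¹ : ℝ) * deriv Φ (-t / h)) * (Φ (-t / h))⁻¹ ^ 2 := by
    refine hd.deriv.trans ?_
    have := hΦ0 (-t / h)
    have hhC : (h : ℂ) ≠ 0 := by exact_mod_cast hh.ne'
    rw [Complex.real_smul]
    push_cast
    field_simp
    ring
  set A : ℝ := 1 + (-t / h) ^ 2 with hA
  have hApos : 0 < A := by positivity
  have hinv : ‖(Φ (-t / h))⁻¹‖ ≤ c⁻¹ * A ^ (β / 2) := by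
    rw [norm_inv]
    calc ‖Φ (-t / h)‖⁻¹ ≤ (c * A ^ (-β / 2))⁻¹ := by
          gcongr
          exact hlow _
      _ = c⁻¹ * A ^ (β / 2) := by
          rw [mul_inv, neg_div, Real.rpow_neg hApos.le, inv_inv]
  have hM0 : 0 ≤ M := (norm_nonneg _).trans hM
  have hAA : A ^ (-(β + 1) / 2) * (A ^ (β / 2)) ^ 2 = A ^ ((β - 1) / 2) := by
    rw [← Real.rpow_natCast, ← Real.rpow_mul hApos.le, ← Real.rpow_add hApos]
    congr 1
    push_cast
    ring
  rw [hd']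
  calc _ ≤ ‖deriv Φk t‖ * ‖(Φ (-t / h))⁻¹‖ +
        ‖Φk t‖ * (h⁻¹ * ‖deriv Φ (-t / h)‖) * ‖(Φ (-t / h))⁻¹‖ ^ 2 := by
        refine (norm_add_le _ _).trans (le_of_eq ?_)
        rw [norm_mul, norm_mul, norm_mul, norm_mul, norm_pow, Complex.norm_real,
          Real.norm_of_nonneg (inv_nonneg.2 hh.le)]
    _ ≤ M * (c⁻¹ * A ^ (β / 2)) +
        1 * (h⁻¹ * (C_S * A ^ (-(β + 1) / 2))) * (c⁻¹ * A ^ (β / 2)) ^ 2 := by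
        gcongr
        exact hder _
    _ = M * c⁻¹ * A ^ (β / 2) + C_S * c⁻¹ ^ 2 * (h⁻¹ * A ^ ((β - 1) / 2)) := by
        rw [← hAA]
        ring
    _ ≤ M * c⁻¹ * (h ^ (-β) * 2 ^ (β / 2)) +
        C_S * c⁻¹ ^ 2 * (h ^ (-β) * (|t| ^ (β - 1) + 2 ^ (β / 2))) := by
        exact add_le_add
          (mul_le_mul_of_nonneg_left (rpow_scale_le hβ hh hh1 ht) (by positivity))
          (mul_le_mul_of_nonneg_left (rpow_scale_sub_one_le hh hh1 ht ht0) (by positivity))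
    _ = _ := by ring

/-- Bound (eq:supK)/(Eq:KL1) of the paper under Assumption 3 (S): for the deconvolution
kernel built from a bandlimited kernel Fourier transform `Φ_k` and an error
characteristic function `Φ` with two-sided polynomial decay of order `β` and derivative
decay of order `β+1`, one has `sup_w |w·K(w;h)| ≤ C' h^{−β}`, hence
`|K(w;h)| ≤ C'/(|w| h^β)` for `w ≠ 0`, with `C'` depending only on `c, C_S, β, Φ_k`. -/
theorem deconvKernel_sup_bound
    (β c C C_S D : ℝ) (hβ : 0 < β) (hc : 0 < c) (hcC : c ≤ C) (hCS : 0 < C_S)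
    (hD : D ∈ Set.Ioo (0 : ℝ) 1)
    (Φk : ℝ → ℂ) (hΦk_smooth : ContDiff ℝ 2 Φk)
    (hΦk_one : ∀ t : ℝ, |t| ≤ D → Φk t = 1)
    (hΦk_le : ∀ t : ℝ, ‖Φk t‖ ≤ 1)
    (hΦk_zero : ∀ t : ℝ, 1 < |t| → Φk t = 0) :
    ∃ C' : ℝ, 0 < C' ∧
      ∀ Φ : ℝ → ℂ, ContDiff ℝ 1 Φ → (∀ t, Φ t ≠ 0) →
        (∀ t : ℝ, c * (1 + t ^ 2) ^ (-β / 2) ≤ ‖Φ t‖) →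
        (∀ t : ℝ, ‖Φ t‖ ≤ C * (1 + t ^ 2) ^ (-β / 2)) →
        (∀ t : ℝ, ‖deriv Φ t‖ ≤ C_S * (1 + t ^ 2) ^ (-(β + 1) / 2)) →
        ∀ h : ℝ, 0 < h → h ≤ 1 →
          (∀ w : ℝ, |w| * ‖deconvKernel Φk Φ h w‖ ≤ C' * h ^ (-β)) ∧
          (∀ w : ℝ, w ≠ 0 → ‖deconvKernel Φk Φ h w‖ ≤ C' / (|w| * h ^ β)) := by
  have hk1 : Differentiable ℝ Φk := hΦk_smooth.differentiable (by norm_num)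
  have hk1' : Continuous (deriv Φk) := hΦk_smooth.continuous_deriv (by norm_num)
  obtain ⟨M, hM⟩ := isCompact_Icc.exists_bound_of_continuousOn
    (hk1'.continuousOn (s := Set.Icc (-1 : ℝ) 1))
  set B : ℝ → ℝ := fun t =>
    M * c⁻¹ * 2 ^ (β / 2) + C_S * c⁻¹ ^ 2 * (|t| ^ (β - 1) + 2 ^ (β / 2)) with hB
  have hM0 : 0 ≤ M := (norm_nonneg _).trans (hM 0 (by simp))
  have hB0 : ∀ t, 0 ≤ B t := fun t => by positivity
  have hBint : IntegrableOn B (Set.Icc (-1) 1) := by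
    have hconst : ∀ a : ℝ, IntegrableOn (fun _ : ℝ => a) (Set.Icc (-1) 1) := fun a =>
      continuousOn_const.integrableOn_Icc
    exact (hconst _).add (((integrableOn_abs_rpow hβ).add (hconst _)).const_mul _)
  have hI0 : 0 ≤ ∫ t in Set.Icc (-1) 1, B t := integral_nonneg hB0
  refine ⟨(∫ t in Set.Icc (-1) 1, B t) + 1, by linarith, ?_⟩
  intro Φ hΦ hΦ0 hlow _ hder h hh hh1
  set g : ℝ → ℂ := fun t => Φk t / Φ (-t / h) with hg
  have hgC : ContDiff ℝ 1 g := by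
    have hin : ContDiff ℝ 1 (fun t : ℝ => -t / h) := contDiff_id.neg.div_const h
    simp only [hg, div_eq_mul_inv (Φk _)]
    exact (hΦk_smooth.of_le one_le_two).mul ((hΦ.comp hin).inv (fun t => hΦ0 _))
  have hg0 : ∀ t, t ∉ Set.Icc (-1 : ℝ) 1 → g t = 0 := by
    intro t ht
    have : 1 < |t| := by
      by_contra! hcon
      exact ht (abs_le.1 hcon)
    simp [hg, hΦk_zero t this]
  have hgs : HasCompactSupport g := HasCompactSupport.intro isCompact_Icc hg0
  have hgd0 : ∀ t, t ∉ Set.Icc (-1 : ℝ) 1 → deriv g t = 0 := by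
    intro t ht
    have : g =ᶠ[nhds t] fun _ => 0 := by
      filter_upwards [isClosed_Icc.isOpen_compl.mem_nhds ht] with s hs using hg0 s hs
    simp [this.deriv_eq]
  have hint : ∫ t, ‖deriv g t‖ ≤ h ^ (-β) * ∫ t in Set.Icc (-1) 1, B t := by
    rw [← setIntegral_eq_integral_of_forall_compl_eq_zero (s := Set.Icc (-1 : ℝ) 1)
      (fun t ht => by rw [hgd0 t ht, norm_zero]), ← integral_const_mul]
    refine setIntegral_mono_on_ae ?_ (hBint.const_mul _) measurableSet_Icc ?_
    · exact ((hgC.continuous_deriv le_rfl).norm).continuousOn.integrableOn_Icc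
    · filter_upwards [Measure.ae_ne volume (0 : ℝ)] with t ht0 ht
      exact norm_deriv_quotient_le hβ hc hk1 (hΦk_le t) (hM t ht)
        (hΦ.differentiable (by norm_num)) hΦ0 hlow hder hCS hh hh1 (abs_le.2 ht) ht0
  have hhp : 0 < h ^ (-β) := Real.rpow_pos_of_pos hh _
  have main : ∀ w : ℝ, |w| * ‖deconvKernel Φk Φ h w‖ ≤
      ((∫ t in Set.Icc (-1) 1, B t) + 1) * h ^ (-β) := by
    intro w
    have h1 := (abs_mul_norm_fourierIntegral_le hgC hgs w).trans hint
    have hpi : (2 * Real.pi)⁻¹ ≤ 1 := inv_le_one_of_one_le₀ (by linarith [Real.pi_gt_three])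
    have hle : ‖deconvKernel Φk Φ h w‖ ≤
        ‖∫ t : ℝ, Complex.exp (-(Complex.I * t * w)) * g t‖ := by
      rw [deconvKernel, norm_smul, Real.norm_of_nonneg (by positivity)]
      exact mul_le_of_le_one_left (norm_nonneg _) hpi
    calc _ ≤ |w| * ‖∫ t : ℝ, Complex.exp (-(Complex.I * t * w)) * g t‖ := by gcongr
      _ ≤ _ := by nlinarith
  refine ⟨main, fun w hw => ?_⟩
  have hw' : 0 < |w| := abs_pos.2 hw
  have hhb : 0 < h ^ β := Real.rpow_pos_of_pos hh _
  have := main w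
  rw [Real.rpow_neg hh.le, ← div_eq_mul_inv, le_div_iff₀ hhb] at this
  rw [le_div_iff₀ (by positivity)]
  linarith
end

section
/- Let β > 0, 0 < c ≤ C, C_S > 0, D ∈ (0,1), let Φ_k : ℝ → ℂ be twice continuously differentiable with Φ_k(t) = 1 for |t| ≤ D, |Φ_k(t)| ≤ 1, and Φ_k(t) = 0 for |t| > 1, and let Φ : ℝ → ℂ be continuously differentiable, nowhere vanishing, with c(1+t²)^{−β/2} ≤ |Φ(t)| ≤ C(1+t²)^{−β/2} and |Φ'(t)| ≤ C_S(1+t²)^{−(β+1)/2} for all t. For h ∈ (0,1] set K(w;h) = (1/2π)∫_ℝ e^{−itw} Φ_k(t)/Φ(−t/h) dt. Then there is a constant 𝒞 > 0 depending only on c, C_S, β, Φ_k such that for every a > 1, every x ∈ [0,1] and every h ∈ (0,1]: ∫_{|z|>a} K((z−x)/h; h)² dz ≤ 𝒞 · (2a/(a²−x²)) · h^{2−2β}. -/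
/-!
Put `g(t) = Φk(t)/Φ(−t/h)`, a `C¹` function supported in `[−1,1]`. Integrating by parts,
`|w| |K(w;h)| ≤ (2π)⁻¹ ∫ |g'|`, so everything reduces to `∫ |g'| ≤ A h^{−β}` with `A` independent
of `Φ` and `h` (`abs_mul_norm_deconv_integral_le`). The term `Φk'/Φ(−·/h)` is `O(h^{−β})` pointwise
on `[−1,1]`. The term carrying `Φ'` is at most a constant times `h⁻¹(1+t²/h²)^{(β−1)/2}`, which is
dominated by `h^{−β}(2^{(β−1)/2} + |t|^{β−1})` for every `β > 0`
(`inv_mul_rpow_one_add_sq_le`), and `|t|^{β−1}` is integrable on `[−1,1]`.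

At `w = (z−x)/h` this reads `|K|² ≤ (A/2π)² h^{2−2β} (z−x)^{−2}`, and the claim follows from
`∫_{|z|>a} (z−x)^{−2} dz = 1/(a−x) + 1/(a+x) = 2a/(a²−x²)`.
-/

open MeasureTheory

/-- Where `|t| ≤ 1` and `h ≤ 1`, both summands of `1 + t²/h²` are at most `h⁻²`. -/
lemma rpow_one_add_sq_le {β h t : ℝ} (hβ : 0 < β) (h0 : 0 < h) (h1 : h ≤ 1) (ht : |t| ≤ 1) :
    (1 + (-t / h) ^ 2) ^ (β / 2) ≤ 2 ^ (β / 2) * h ^ (-β) := by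
  have hp : 1 + (-t / h) ^ 2 ≤ 2 * h ^ (-2 : ℝ) := by
    have ht2 : t ^ 2 ≤ 1 := by rw [← sq_abs]; exact pow_le_one₀ (abs_nonneg t) ht
    have : h ^ (-2 : ℝ) = (h ^ 2)⁻¹ := by rw [Real.rpow_neg h0.le]; norm_num
    rw [this, neg_div, neg_sq, div_pow, ← sub_nonneg]
    have hh : h ^ 2 ≤ 1 := pow_le_one₀ h0.le h1
    have : 2 * (h ^ 2)⁻¹ - (1 + t ^ 2 / h ^ 2) = (2 - h ^ 2 - t ^ 2) / h ^ 2 := by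
      field_simp; ring
    rw [this]
    exact div_nonneg (by linarith) (by positivity)
  calc _ ≤ (2 * h ^ (-2 : ℝ)) ^ (β / 2) :=
        Real.rpow_le_rpow (by positivity) hp (by positivity)
    _ = _ := by
        rw [Real.mul_rpow (by norm_num) (by positivity), ← Real.rpow_mul h0.le]
        congr 2; ring

/-- The majorant `h^{−β}|t|^{β−1}` is needed only for `β < 1`, where no bound uniform in `t` of order
`h^{−β}` holds; it is integrable at `0` because `β > 0`. -/
lemma inv_mul_rpow_one_add_sq_le {β h t : ℝ} (hβ : 0 < β) (h0 : 0 < h) (h1 : h ≤ 1)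
    (ht : |t| ≤ 1) (ht0 : t ≠ 0) :
    h⁻¹ * (1 + (-t / h) ^ 2) ^ ((β - 1) / 2) ≤
      (2 ^ ((β - 1) / 2) + |t| ^ (β - 1)) * h ^ (-β) := by
  have hh : h ^ (-β) = h⁻¹ * h ^ (-(β - 1)) := by
    rw [← Real.rpow_neg_one h, ← Real.rpow_add h0]; congr 1; ring
  rw [hh, mul_left_comm]
  refine mul_le_mul_of_nonneg_left ?_ (by positivity)
  have htp : 0 < |t| := abs_pos.2 ht0
  have e1 : 0 ≤ (2 : ℝ) ^ ((β - 1) / 2) * h ^ (-(β - 1)) := by positivity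
  have e2 : 0 ≤ |t| ^ (β - 1) * h ^ (-(β - 1)) := by positivity
  rw [add_mul]
  -- `1 + t²/h²` is bounded below by `t²/h²` when the exponent is negative, and above by `2/h²`
  -- when it is positive.
  rcases lt_trichotomy β 1 with hb | hb | hb
  · have : (1 + (-t / h) ^ 2) ^ ((β - 1) / 2) ≤ ((|t| / h) ^ 2) ^ ((β - 1) / 2) := by
      refine Real.rpow_le_rpow_of_nonpos (by positivity) ?_ (by linarith)
      rw [div_pow, div_pow, neg_sq, sq_abs]; linarith
    have e3 : ((|t| / h) ^ 2) ^ ((β - 1) / 2) = |t| ^ (β - 1) * h ^ (-(β - 1)) := by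
      rw [← Real.rpow_natCast, ← Real.rpow_mul (by positivity),
        Real.div_rpow (by positivity) h0.le, Real.rpow_neg h0.le, div_eq_mul_inv]
      congr 2 <;> (try congr 1) <;> push_cast <;> ring
    linarith
  · subst hb; norm_num
  · have := rpow_one_add_sq_le (β := β - 1) (by linarith) h0 h1 ht
    linarith

lemma integral_Ioi_inv_sub_sq {a x : ℝ} (ha : x < a) :
    IntegrableOn (fun z : ℝ => ((z - x) ^ 2)⁻¹) (Set.Ioi a) ∧
      ∫ z in Set.Ioi a, ((z - x) ^ 2)⁻¹ = (a - x)⁻¹ := by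
  have hd : ∀ z ∈ Set.Ici a, HasDerivAt (fun z : ℝ => -(z - x)⁻¹) (((z - x) ^ 2)⁻¹) z := by
    intro z hz
    have hz' : z - x ≠ 0 := by have : a ≤ z := hz; linarith
    have := (((hasDerivAt_id z).sub_const x).inv hz').neg
    refine this.congr_deriv ?_
    simp [neg_div]
  have hl : Filter.Tendsto (fun z : ℝ => -(z - x)⁻¹) Filter.atTop (nhds 0) := by
    rw [← neg_zero]
    exact (tendsto_inv_atTop_zero.comp
      (Filter.tendsto_atTop_add_const_right _ (-x) Filter.tendsto_id)).neg
  have hp : ∀ z ∈ Set.Ioi a, 0 ≤ ((z - x) ^ 2)⁻¹ := fun z _ => by positivity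
  refine ⟨integrableOn_Ioi_deriv_of_nonneg' hd hp hl, ?_⟩
  rw [integral_Ioi_of_hasDerivAt_of_nonneg' hd hp hl]; ring

lemma integral_abs_gt_inv_sub_sq {a x : ℝ} (hx : 0 ≤ x) (ha : x < a) :
    IntegrableOn (fun z : ℝ => ((z - x) ^ 2)⁻¹) {z : ℝ | a < |z|} ∧
      ∫ z in {z : ℝ | a < |z|}, ((z - x) ^ 2)⁻¹ = 2 * a / (a ^ 2 - x ^ 2) := by
  have hs : {z : ℝ | a < |z|} = Set.Ioi a ∪ Set.Iio (-a) := by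
    ext z; simp [lt_abs, lt_neg]
  obtain ⟨i1, v1⟩ := integral_Ioi_inv_sub_sq ha
  obtain ⟨i2, v2⟩ := integral_Ioi_inv_sub_sq (a := a) (x := -x) (by linarith)
  have hf : (fun z : ℝ => ((-z - -x) ^ 2)⁻¹) = fun z : ℝ => ((z - x) ^ 2)⁻¹ := by
    ext z; congr 1; ring
  have i3 : IntegrableOn (fun z : ℝ => ((z - x) ^ 2)⁻¹) (Set.Iio (-a)) := by
    have := ((Measure.measurePreserving_neg (volume : Measure ℝ)).integrableOn_comp_preimage
      (Homeomorph.neg ℝ).measurableEmbedding).2 i2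
    rw [← hf]
    simpa [Function.comp_def] using this
  have v3 : ∫ z in Set.Iio (-a), ((z - x) ^ 2)⁻¹ = (a + x)⁻¹ := by
    rw [← integral_Iic_eq_integral_Iio, ← hf,
      integral_comp_neg_Iic (-a) (fun z : ℝ => ((z - -x) ^ 2)⁻¹), neg_neg, v2, sub_neg_eq_add]
  rw [hs]
  refine ⟨i1.union i3, ?_⟩
  rw [setIntegral_union _ measurableSet_Iio i1 i3, v1, v3]
  · have : a - x ≠ 0 := by linarith
    have h2 : a + x ≠ 0 := by linarith
    have h3 : a ^ 2 - x ^ 2 ≠ 0 := by rw [sq_sub_sq]; positivity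
    field_simp; ring
  · rw [Set.disjoint_left]; intro z h1 h2
    have h1 : a < z := h1
    have h2 : z < -a := h2
    linarith

/-- One integration by parts: a `C¹` function whose derivative has small `L¹` norm has a Fourier
integral of size `O(1/|w|)`. -/
lemma abs_mul_norm_fourier_le {g : ℝ → ℂ} (hg : ContDiff ℝ 1 g) (hs : HasCompactSupport g) (w : ℝ) :
    |w| * ‖∫ t : ℝ, Complex.exp (-(Complex.I * t * w)) * g t‖ ≤ ∫ t, ‖deriv g t‖ := by
  have hg' : Continuous (deriv g) := hg.continuous_deriv le_rfl
  have hd : ∀ t : ℝ, HasDerivAt (fun t : ℝ => Complex.exp (-(Complex.I * t * w)) * g t)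
      (-(Complex.I * w) * (Complex.exp (-(Complex.I * t * w)) * g t) +
        Complex.exp (-(Complex.I * t * w)) * deriv g t) t := by
    intro t
    have h1 : HasDerivAt (fun t : ℝ => -(Complex.I * t * w)) (-(Complex.I * w)) t := by
      have := (((Complex.ofRealCLM.hasDerivAt (x := t)).const_mul Complex.I).mul_const (w : ℂ)).neg
      exact this.congr_deriv (by simp)
    have := h1.cexp.mul ((hg.differentiable one_ne_zero) t).hasDerivAt
    refine this.congr_deriv ?_
    ring
  have hc : Continuous fun t : ℝ => Complex.exp (-(Complex.I * t * w)) := by fun_prop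
  have i1 : Integrable (fun t : ℝ => Complex.exp (-(Complex.I * t * w)) * g t) :=
    (hc.mul hg.continuous).integrable_of_hasCompactSupport hs.mul_left
  have i2 : Integrable (fun t : ℝ => Complex.exp (-(Complex.I * t * w)) * deriv g t) :=
    (hc.mul hg').integrable_of_hasCompactSupport hs.deriv.mul_left
  have h0 := integral_eq_zero_of_hasDerivAt_of_integrable hd ((i1.const_mul _).add i2) i1
  rw [integral_add (i1.const_mul _) i2, integral_const_mul] at h0
  have h1 : |w| * ‖∫ t : ℝ, Complex.exp (-(Complex.I * t * w)) * g t‖ =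
      ‖∫ t : ℝ, Complex.exp (-(Complex.I * t * w)) * deriv g t‖ := by
    rw [← eq_neg_iff_add_eq_zero] at h0
    rw [← norm_neg (∫ t : ℝ, _ * deriv g t), ← h0]
    simp
  rw [h1]
  refine (norm_integral_le_integral_norm _).trans_eq (integral_congr_ae (.of_forall fun t => ?_))
  have : ‖Complex.exp (-(Complex.I * t * w))‖ = 1 := by
    rw [Complex.norm_exp]; simp
  simp [this]

/-- The quotient rule gives `Φk'/Φ` and `h⁻¹ Φk Φ'/Φ²`; at `s = −t/h` these are of order
`(1+s²)^{β/2}` and `h⁻¹(1+s²)^{(β−1)/2}` respectively. The envelope separates the dependence on `t`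
from the factor `h^{−β}`. -/
lemma norm_deriv_integrand_le {β c C_S M h t : ℝ} (hβ : 0 < β) (hc : 0 < c) (hCS : 0 < C_S)
    (h0 : 0 < h) (h1 : h ≤ 1) (ht : |t| ≤ 1) (ht0 : t ≠ 0) {Φk Φ : ℝ → ℂ}
    (hk : Differentiable ℝ Φk) (hk1 : ‖Φk t‖ ≤ 1) (hM : ‖deriv Φk t‖ ≤ M)
    (hΦ : Differentiable ℝ Φ) (hne : ∀ t, Φ t ≠ 0)
    (hlow : ∀ t : ℝ, c * (1 + t ^ 2) ^ (-β / 2) ≤ ‖Φ t‖)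
    (hder : ∀ t : ℝ, ‖deriv Φ t‖ ≤ C_S * (1 + t ^ 2) ^ (-(β + 1) / 2)) :
    ‖deriv (fun t => Φk t / Φ (-t / h)) t‖ ≤
      (M / c * 2 ^ (β / 2) + C_S / c ^ 2 * (2 ^ ((β - 1) / 2) + |t| ^ (β - 1))) * h ^ (-β) := by
  set s := -t / h with hs
  have hM0 : 0 ≤ M := (norm_nonneg _).trans hM
  have hp : 0 < 1 + s ^ 2 := by positivity
  have hΦn : 0 < ‖Φ s‖ := norm_pos_iff.2 (hne s)
  have hinv : ‖Φ s‖⁻¹ ≤ c⁻¹ * (1 + s ^ 2) ^ (β / 2) := by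
    have := inv_anti₀ (by positivity) (hlow s)
    rwa [mul_inv, neg_div, Real.rpow_neg hp.le, inv_inv] at this
  have hd : HasDerivAt (fun t => Φk t / Φ (-t / h))
      (deriv Φk t / Φ s + (h⁻¹ : ℝ) • (Φk t * deriv Φ s / Φ s ^ 2)) t := by
    have e1 : HasDerivAt (fun t : ℝ => -t / h) (-1 / h) t := (hasDerivAt_neg t).div_const h
    have e2 := (hΦ s).hasDerivAt.scomp t e1
    refine ((hk t).hasDerivAt.div e2 (hne s)).congr_deriv ?_
    have := hne s
    simp only [Function.comp_apply, ← hs, Complex.real_smul]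
    push_cast
    field_simp
    ring
  rw [hd.deriv]
  have b1 : ‖deriv Φk t / Φ s‖ ≤ M / c * 2 ^ (β / 2) * h ^ (-β) := by
    rw [norm_div, div_eq_mul_inv]
    calc _ ≤ M * (c⁻¹ * (1 + s ^ 2) ^ (β / 2)) := by gcongr
      _ ≤ M * (c⁻¹ * (2 ^ (β / 2) * h ^ (-β))) := by
        have := rpow_one_add_sq_le hβ h0 h1 ht
        gcongr
      _ = _ := by ring
  have b2 : ‖(h⁻¹ : ℝ) • (Φk t * deriv Φ s / Φ s ^ 2)‖ ≤
      C_S / c ^ 2 * (2 ^ ((β - 1) / 2) + |t| ^ (β - 1)) * h ^ (-β) := by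
    rw [norm_smul, norm_div, norm_mul, norm_pow, Real.norm_of_nonneg (by positivity),
      div_eq_mul_inv, ← inv_pow]
    calc _ ≤ h⁻¹ * (1 * (C_S * (1 + s ^ 2) ^ (-(β + 1) / 2)) *
          (c⁻¹ * (1 + s ^ 2) ^ (β / 2)) ^ 2) := by
          have := hder s
          gcongr
      _ = C_S / c ^ 2 * (h⁻¹ * (1 + s ^ 2) ^ ((β - 1) / 2)) := by
          have : (1 + s ^ 2) ^ ((β - 1) / 2) =
              (1 + s ^ 2) ^ (-(β + 1) / 2) * ((1 + s ^ 2) ^ (β / 2)) ^ 2 := by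
            rw [sq ((1 + s ^ 2) ^ (β / 2)), ← Real.rpow_add hp, ← Real.rpow_add hp]
            congr 1; ring
          rw [this]; field_simp
      _ ≤ C_S / c ^ 2 * ((2 ^ ((β - 1) / 2) + |t| ^ (β - 1)) * h ^ (-β)) := by
          have := inv_mul_rpow_one_add_sq_le hβ h0 h1 ht ht0
          gcongr
      _ = _ := by ring
  calc _ ≤ _ := norm_add_le _ _
    _ ≤ _ := add_le_add b1 b2
    _ = _ := by ring

lemma integrableOn_envelope {β : ℝ} (hβ : 0 < β) (A B E : ℝ) :
    IntegrableOn (fun t : ℝ => A + B * (E + |t| ^ (β - 1))) (Set.Icc (-1) 1) := by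
  have h1 : IntegrableOn (fun t : ℝ => |t| ^ (β - 1)) (Set.Icc (-1) 1) := by
    have hp : IntegrableOn (fun t : ℝ => |t| ^ (β - 1)) (Set.Ioc 0 1) := by
      have := (intervalIntegrable_iff_integrableOn_Ioc_of_le zero_le_one).1
        (intervalIntegral.intervalIntegrable_rpow' (a := 0) (b := 1) (r := β - 1) (by linarith))
      refine this.congr_fun (fun t ht => ?_) measurableSet_Ioc
      simp only [abs_of_pos ht.1]
    have hi := (intervalIntegrable_iff_integrableOn_Ioc_of_le (zero_le_one (α := ℝ))).2 hp
    have hn : IntervalIntegrable (fun t : ℝ => |t| ^ (β - 1)) volume (-1) 0 := by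
      have := (IntervalIntegrable.iff_comp_neg (f := fun t : ℝ => |t| ^ (β - 1))
        (a := 0) (b := 1) (by simp)).1 hi
      simpa using this.symm
    rw [integrableOn_Icc_iff_integrableOn_Ioc]
    exact (intervalIntegrable_iff_integrableOn_Ioc_of_le (by norm_num)).1 (hn.trans hi)
  have hcst : ∀ r : ℝ, IntegrableOn (fun _ : ℝ => r) (Set.Icc (-1) 1) := fun r =>
    integrableOn_const (by simp)
  exact (hcst A).add (((hcst E).add h1).const_mul B)

lemma abs_mul_norm_deconv_integral_le
    {β c C_S h : ℝ} (hβ : 0 < β) (hc : 0 < c) (hCS : 0 < C_S)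
    (h0 : 0 < h) (h1 : h ≤ 1) {M : ℝ} {Φk Φ : ℝ → ℂ}
    (hk : ContDiff ℝ 1 Φk) (hk1 : ∀ t, ‖Φk t‖ ≤ 1)
    (hM : ∀ t ∈ Set.Icc (-1 : ℝ) 1, ‖deriv Φk t‖ ≤ M)
    (hk0 : ∀ t : ℝ, 1 < |t| → Φk t = 0)
    (hΦ : ContDiff ℝ 1 Φ) (hne : ∀ t, Φ t ≠ 0)
    (hlow : ∀ t : ℝ, c * (1 + t ^ 2) ^ (-β / 2) ≤ ‖Φ t‖)
    (hder : ∀ t : ℝ, ‖deriv Φ t‖ ≤ C_S * (1 + t ^ 2) ^ (-(β + 1) / 2)) (w : ℝ) :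
    |w| * ‖∫ t : ℝ, Complex.exp (-(Complex.I * t * w)) * (Φk t / Φ (-t / h))‖ ≤
      (∫ t in Set.Icc (-1 : ℝ) 1, (M / c * 2 ^ (β / 2) +
        C_S / c ^ 2 * (2 ^ ((β - 1) / 2) + |t| ^ (β - 1)))) * h ^ (-β) := by
  have hg : ContDiff ℝ 1 (fun t => Φk t / Φ (-t / h)) := by
    simp only [div_eq_mul_inv]
    have hcomp : ContDiff ℝ 1 fun t : ℝ => Φ (-t * h⁻¹) :=
      hΦ.comp (contDiff_neg.mul contDiff_const)
    exact hk.mul (hcomp.inv fun t => hne _)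
  have hz : ∀ t : ℝ, 1 < |t| → Φk t / Φ (-t / h) = 0 := fun t ht => by simp [hk0 t ht]
  have hs : HasCompactSupport (fun t => Φk t / Φ (-t / h)) := by
    refine HasCompactSupport.intro (isCompact_Icc (a := (-1 : ℝ)) (b := 1)) fun t ht => hz t ?_
    by_contra! hcon
    exact ht (abs_le.1 hcon)
  refine (abs_mul_norm_fourier_le hg hs w).trans ?_
  have hz' : ∀ t : ℝ, t ∉ Set.Icc (-1 : ℝ) 1 → ‖deriv (fun t => Φk t / Φ (-t / h)) t‖ = 0 := by
    intro t ht
    have hev : (fun t => Φk t / Φ (-t / h)) =ᶠ[nhds t] fun _ => 0 := by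
      filter_upwards [isClosed_Icc.isOpen_compl.mem_nhds ht] with u hu
      refine hz u ?_
      by_contra! hcon
      exact hu (abs_le.1 hcon)
    rw [hev.deriv_eq]; simp
  rw [← setIntegral_eq_integral_of_forall_compl_eq_zero hz', ← integral_mul_const]
  refine integral_mono_of_nonneg (.of_forall fun t => norm_nonneg _)
    ((integrableOn_envelope hβ _ _ _).mul_const _) ?_
  have hne0 : ∀ᵐ t : ℝ ∂(volume.restrict (Set.Icc (-1 : ℝ) 1)), t ≠ 0 :=
    ae_restrict_of_ae (Measure.ae_ne volume 0)
  filter_upwards [hne0, ae_restrict_mem measurableSet_Icc] with t ht0 ht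
  exact norm_deriv_integrand_le hβ hc hCS h0 h1 (abs_le.2 ht) ht0
    (hk.differentiable one_ne_zero) (hk1 t) (hM t ht) (hΦ.differentiable one_ne_zero) hne hlow hder

/-- Lemma 4 of the paper (case (S)): tail estimate for the squared deconvolution
kernel: `∫_{|z|>a} K((z−x)/h;h)² dz ≤ 𝒞 · (2a/(a²−x²)) · h^{2−2β}` for all `a > 1`,
`x ∈ [0,1]`, `h ∈ (0,1]`, with `𝒞` depending only on `c, C_S, β, Φ_k`. -/
theorem deconvKernel_tail_bound
    (β c C C_S D : ℝ) (hβ : 0 < β) (hc : 0 < c) (hcC : c ≤ C) (hCS : 0 < C_S)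
    (hD : D ∈ Set.Ioo (0 : ℝ) 1)
    (Φk : ℝ → ℂ) (hΦk_smooth : ContDiff ℝ 2 Φk)
    (hΦk_one : ∀ t : ℝ, |t| ≤ D → Φk t = 1)
    (hΦk_le : ∀ t : ℝ, ‖Φk t‖ ≤ 1)
    (hΦk_zero : ∀ t : ℝ, 1 < |t| → Φk t = 0) :
    ∃ 𝒞 : ℝ, 0 < 𝒞 ∧
      ∀ Φ : ℝ → ℂ, ContDiff ℝ 1 Φ → (∀ t, Φ t ≠ 0) →
        (∀ t : ℝ, c * (1 + t ^ 2) ^ (-β / 2) ≤ ‖Φ t‖) →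
        (∀ t : ℝ, ‖Φ t‖ ≤ C * (1 + t ^ 2) ^ (-β / 2)) →
        (∀ t : ℝ, ‖deriv Φ t‖ ≤ C_S * (1 + t ^ 2) ^ (-(β + 1) / 2)) →
        ∀ a : ℝ, 1 < a → ∀ x ∈ Set.Icc (0 : ℝ) 1, ∀ h : ℝ, 0 < h → h ≤ 1 →
          (∫ z in {z : ℝ | a < |z|}, ‖deconvKernel Φk Φ h ((z - x) / h)‖ ^ 2) ≤
            𝒞 * (2 * a / (a ^ 2 - x ^ 2)) * h ^ (2 - 2 * β) := by
  obtain ⟨M, hM⟩ := (isCompact_Icc (a := (-1 : ℝ)) (b := 1)).exists_bound_of_continuousOn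
    (hΦk_smooth.continuous_deriv (by norm_num)).continuousOn
  set A := ∫ t in Set.Icc (-1 : ℝ) 1, (M / c * 2 ^ (β / 2) +
        C_S / c ^ 2 * (2 ^ ((β - 1) / 2) + |t| ^ (β - 1))) with hA
  refine ⟨((2 * Real.pi)⁻¹ * A) ^ 2 + 1, by positivity, ?_⟩
  intro Φ hΦ hne hlow _ hder a ha x hx h h0 h1
  have hxa : x < a := hx.2.trans_lt ha
  obtain ⟨hi, hv⟩ := integral_abs_gt_inv_sub_sq hx.1 hxa
  have hpt : ∀ z : ℝ, a < |z| → ‖deconvKernel Φk Φ h ((z - x) / h)‖ ^ 2 ≤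
      ((2 * Real.pi)⁻¹ * A) ^ 2 * h ^ (2 - 2 * β) * ((z - x) ^ 2)⁻¹ := by
    intro z hz
    have hzx : z - x ≠ 0 := by
      intro h2
      rw [sub_eq_zero.1 h2, abs_of_nonneg hx.1] at hz
      linarith
    have hzx' : 0 < |z - x| := abs_pos.2 hzx
    have key := abs_mul_norm_deconv_integral_le hβ hc hCS h0 h1 (hΦk_smooth.of_le (by norm_num))
      hΦk_le hM hΦk_zero hΦ hne hlow hder ((z - x) / h)
    rw [← hA, abs_div, abs_of_pos h0] at key
    have hK : ‖deconvKernel Φk Φ h ((z - x) / h)‖ ≤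
        (2 * Real.pi)⁻¹ * (A * h ^ (-β) * (h / |z - x|)) := by
      rw [deconvKernel, norm_smul, Real.norm_of_nonneg (by positivity)]
      refine mul_le_mul_of_nonneg_left ?_ (by positivity)
      rw [← mul_div_assoc, le_div_iff₀ hzx']
      rw [div_mul_eq_mul_div, div_le_iff₀ h0] at key
      linarith
    have hpow : h ^ (2 - 2 * β) = (h ^ (-β)) ^ 2 * h ^ 2 := by
      rw [← Real.rpow_natCast, ← Real.rpow_natCast, ← Real.rpow_mul h0.le, ← Real.rpow_add h0]
      congr 1; push_cast; ring
    calc _ ≤ ((2 * Real.pi)⁻¹ * (A * h ^ (-β) * (h / |z - x|))) ^ 2 :=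
          pow_le_pow_left₀ (norm_nonneg _) hK 2
      _ = _ := by
          rw [hpow, ← sq_abs (z - x)]; field_simp
  have hms : MeasurableSet {z : ℝ | a < |z|} :=
    measurableSet_lt measurable_const continuous_abs.measurable
  have hsq : 0 < a ^ 2 - x ^ 2 := by
    rw [sq_sub_sq]; exact mul_pos (by linarith [hx.1]) (by linarith)
  calc _ ≤ ∫ z in {z : ℝ | a < |z|},
        ((2 * Real.pi)⁻¹ * A) ^ 2 * h ^ (2 - 2 * β) * ((z - x) ^ 2)⁻¹ := by
        refine integral_mono_of_nonneg (.of_forall fun z => by positivity) (hi.const_mul _) ?_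
        filter_upwards [ae_restrict_mem hms] with z hz using hpt z hz
    _ = ((2 * Real.pi)⁻¹ * A) ^ 2 * (2 * a / (a ^ 2 - x ^ 2)) * h ^ (2 - 2 * β) := by
        rw [integral_const_mul, hv]; ring
    _ ≤ _ := by gcongr; linarith
end

section
/- Let β > 0, 0 < c ≤ C, D ∈ (0,1), let Φ_k : ℝ → ℂ be measurable with Φ_k(t) = 1 for |t| ≤ D, |Φ_k(t)| ≤ 1max, and Φ_k(t) = 0 for |t| > 1, and let Φ : ℝ → ℂ be nowhere vanishing with c(1+t²)^{−β/2} ≤ |Φ(t)| ≤ C(1+t²)^{−β/2} for all t. For h ∈ (0,1] set K(w;h) = (1/2π)∫_ℝ e^{−itw} Φ_k(t)/Φ(−t/h) dt. Then there exist constants 0 < c₁ ≤ c₂ depending only on c, C, β and D such that for all h ∈ (0,1]: c₁ h^{−2β} ≤ ∫_ℝ |K(w;h)|² dw ≤ c₂ h^{−2β}. In particular, by Plancherel's theorem, ∫_ℝ|K(w;h)|²dw = (1/2π)∫_ℝ |Φ_k(t)/Φ(−t/h)|² dt, which is bounded above by (1/2πc²)∫_{|t|≤1}(1+t²/h²)^{β}dt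 and below by (1/2πC²)∫_{|t|≤D}(1+t²/h²)^{β}dt. -/
/-!
Up to scaling, `deconvKernel Φk Φ h` is the Fourier integral of `G(t) = Φk(t) / Φ(-t/h)`, which is
supported in `[-1, 1]` and dominated there by a continuous weight, hence lies in `L¹ ∩ L²`.
Plancherel's theorem reduces everything to bounding `∫ ‖G‖²`.

Mathlib has Plancherel's theorem for the `L²` Fourier transform constructed by density of Schwartz
functions; `fourier_toLp_ae_eq` identifies that transform with the Fourier integral by testing
against smooth compactly supported functions.

The two-sided decay of `Φ` compares `‖Φ(-t/h)‖⁻²` with `(1 + t²/h²)^β` (`norm_sq_inv_bounds`).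
Since `Φk = 1` on `[-D, D]`, `‖Φk‖ ≤ 1` and `Φk = 0` off `[-1, 1]`, this bounds `∫ ‖G‖²` by the two
weight integrals. For `0 < h ≤ 1` the weight is at most `(2/h²)^β` on `[-1, 1]` and at least
`(D²/(4h²))^β` on `[D/2, D]`, so both integrals have order `h^(-2β)`.
-/

open MeasureTheory

open FourierTransform SchwartzMap in
/-- On `L¹ ∩ L²` the `L²` Fourier transform, defined by extension from Schwartz functions, is
represented by the Fourier integral: both define the same tempered distribution. -/
theorem fourier_toLp_ae_eq {f : ℝ → ℂ} (hf : Integrable f) (hf2 : MemLp f 2) :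
    (𝓕 (hf2.toLp f) : Lp ℂ 2 (volume : Measure ℝ)) =ᵐ[volume] 𝓕 f := by
  have hcont : Continuous (𝓕 f) :=
    VectorFourier.fourierIntegral_continuous (L := innerₗ ℝ) Real.continuous_fourierChar
      continuous_inner hf
  refine ae_eq_of_integral_contDiff_smul_eq ((Lp.memLp _).locallyIntegrable (by norm_num))
    hcont.locallyIntegrable fun g hg hgc ↦ ?_
  have h₁ : HasCompactSupport (Complex.ofRealCLM ∘ g) := hgc.comp_left rfl
  have h₂ : ContDiff ℝ (⊤ : ℕ∞) (Complex.ofRealCLM ∘ g) := by fun_prop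
  -- `G` is the test function `g` viewed as a complex Schwartz function.
  set G : 𝓢(ℝ, ℂ) := h₁.toSchwartzMap h₂ with hG
  have hGx : ∀ x, G x = (g x : ℂ) := fun x ↦ by simp [G]
  have key := congrArg (fun T : 𝓢'(ℝ, ℂ) ↦ T G)
    (Lp.fourier_toTemperedDistribution_eq (hf2.toLp f))
  simp only [TemperedDistribution.fourier_apply, Lp.toTemperedDistribution_apply] at key
  have self_adj : ∫ ξ, 𝓕 f ξ * G ξ = ∫ x, f x * 𝓕 G x := by
    simpa using! VectorFourier.integral_bilin_fourierIntegral_eq_flip (.mul ℂ ℂ) (L := innerₗ ℝ)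
      Real.continuous_fourierChar continuous_inner hf G.integrable
  calc ∫ x, g x • (𝓕 (hf2.toLp f) : Lp ℂ 2 (volume : Measure ℝ)) x
      = ∫ x, G x • (𝓕 (hf2.toLp f) : Lp ℂ 2 (volume : Measure ℝ)) x := by simp [hGx]
    _ = ∫ x, 𝓕 G x • (hf2.toLp f : Lp ℂ 2 (volume : Measure ℝ)) x := key.symm
    _ = ∫ x, f x * 𝓕 G x := by
        refine integral_congr_ae ?_
        filter_upwards [hf2.coeFn_toLp] with x hx
        rw [hx, smul_eq_mul, mul_comm]
    _ = ∫ x, g x • 𝓕 f x := by rw [← self_adj]; simp [hGx, mul_comm]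

theorem norm_sq_Lp_two (F : Lp ℂ 2 (volume : Measure ℝ)) : ‖F‖ ^ 2 = ∫ x, ‖F x‖ ^ 2 := by
  have h : ((‖F‖ ^ 2 : ℝ) : ℂ) = ((∫ x, ‖F x‖ ^ 2 : ℝ) : ℂ) := by
    rw [← integral_complex_ofReal]
    have := L2.inner_def (𝕜 := ℂ) F F
    simp only [inner_self_eq_norm_sq_to_K] at this
    simpa using! this
  exact_mod_cast h

open FourierTransform in
/-- Plancherel's theorem for the Fourier integral on `L¹ ∩ L²`. -/
theorem integral_norm_sq_fourier {f : ℝ → ℂ} (hf : Integrable f) (hf2 : MemLp f 2) :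
    ∫ w, ‖𝓕 f w‖ ^ 2 = ∫ t, ‖f t‖ ^ 2 := by
  have h := norm_sq_Lp_two (𝓕 (hf2.toLp f))
  rw [Lp.norm_fourier_eq, norm_sq_Lp_two] at h
  calc ∫ w, ‖𝓕 f w‖ ^ 2 = ∫ w, ‖(𝓕 (hf2.toLp f) : Lp ℂ 2 (volume : Measure ℝ)) w‖ ^ 2 := by
        refine integral_congr_ae ?_
        filter_upwards [fourier_toLp_ae_eq hf hf2] with w hw
        rw [hw]
    _ = ∫ t, ‖(hf2.toLp f : Lp ℂ 2 (volume : Measure ℝ)) t‖ ^ 2 := h.symm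
    _ = ∫ t, ‖f t‖ ^ 2 := by
        refine integral_congr_ae ?_
        filter_upwards [hf2.coeFn_toLp] with x hx
        rw [hx]

open FourierTransform in
theorem deconvKernel_eq_fourier (Φk Φ : ℝ → ℂ) (h w : ℝ) :
    deconvKernel Φk Φ h w =
      (2 * Real.pi)⁻¹ • 𝓕 (fun t : ℝ ↦ Φk t / Φ (-t / h)) (w / (2 * Real.pi)) := by
  rw [deconvKernel, Real.fourier_real_eq_integral_exp_smul]
  congr 2 with t
  rw [smul_eq_mul]
  congr 2
  have : (Real.pi : ℂ) ≠ 0 := by exact_mod_cast Real.pi_ne_zero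
  push_cast
  field_simp

/-- Plancherel's theorem in the normalization of `deconvKernel`: the factor `(2π)⁻²` from the kernel
and the factor `2π` from rescaling the frequency variable leave `(2π)⁻¹`. -/
theorem integral_norm_sq_deconvKernel {Φk Φ : ℝ → ℂ} {h : ℝ}
    (h1 : Integrable fun t : ℝ ↦ Φk t / Φ (-t / h)) (h2 : MemLp (fun t : ℝ ↦ Φk t / Φ (-t / h)) 2) :
    ∫ w : ℝ, ‖deconvKernel Φk Φ h w‖ ^ 2 =
      (2 * Real.pi)⁻¹ * ∫ t : ℝ, ‖Φk t / Φ (-t / h)‖ ^ 2 := by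
  have hpi := Real.pi_pos
  simp only [deconvKernel_eq_fourier, norm_smul, mul_pow]
  rw [integral_const_mul, Measure.integral_comp_div
    (fun w ↦ ‖FourierTransform.fourier (fun t : ℝ ↦ Φk t / Φ (-t / h)) w‖ ^ 2) (2 * Real.pi),
    integral_norm_sq_fourier h1 h2, Real.norm_of_nonneg (by positivity),
    abs_of_pos (by positivity), smul_eq_mul]
  field_simp

theorem norm_sq_inv_bounds {Φ : ℝ → ℂ} {β c C : ℝ} (hc : 0 < c)
    (hlo : ∀ t : ℝ, c * (1 + t ^ 2) ^ (-β / 2) ≤ ‖Φ t‖)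
    (hhi : ∀ t : ℝ, ‖Φ t‖ ≤ C * (1 + t ^ 2) ^ (-β / 2)) (t h : ℝ) :
    (C ^ 2)⁻¹ * (1 + t ^ 2 / h ^ 2) ^ β ≤ (‖Φ (-t / h)‖ ^ 2)⁻¹ ∧
      (‖Φ (-t / h)‖ ^ 2)⁻¹ ≤ (c ^ 2)⁻¹ * (1 + t ^ 2 / h ^ 2) ^ β := by
  have hx : (-t / h) ^ 2 = t ^ 2 / h ^ 2 := by rw [div_pow, neg_sq]
  have hlo := hlo (-t / h)
  have hhi := hhi (-t / h)
  rw [hx] at hlo hhi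
  have hpos : 0 < 1 + t ^ 2 / h ^ 2 := by positivity
  have hr : (1 + t ^ 2 / h ^ 2) ^ β = (((1 + t ^ 2 / h ^ 2) ^ (-β / 2)) ^ 2)⁻¹ := by
    rw [← Real.rpow_mul_natCast hpos.le, ← Real.rpow_neg hpos.le]
    congr 1; push_cast; ring
  have hΦ : 0 < ‖Φ (-t / h)‖ := lt_of_lt_of_le (by positivity) hlo
  rw [hr, ← mul_inv, ← mul_inv, ← mul_pow, ← mul_pow]
  constructor <;> gcongr

/-- The two-sided L²-norm estimate (S2)/(eq:iib) of the paper: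
`c₁ h^{−2β} ≤ ∫ |K(w;h)|² dw ≤ c₂ h^{−2β}`, where by Plancherel
`∫|K(w;h)|²dw = (1/2π)∫ |Φ_k(t)/Φ(−t/h)|² dt`, bounded above by
`(1/2πc²)∫_{|t|≤1}(1+t²/h²)^β dt` and below by `(1/2πC²)∫_{|t|≤D}(1+t²/h²)^β dt`,
with constants depending only on `c, C, β, D`. -/
theorem deconvKernel_L2_two_sided
    (β c C D : ℝ) (hβ : 0 < β) (hc : 0 < c) (hcC : c ≤ C)
    (hD : D ∈ Set.Ioo (0 : ℝ) 1) :
    ∃ c₁ c₂ : ℝ, 0 < c₁ ∧ c₁ ≤ c₂ ∧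
      ∀ Φk : ℝ → ℂ, Measurable Φk →
        (∀ t : ℝ, |t| ≤ D → Φk t = 1) → (∀ t : ℝ, ‖Φk t‖ ≤ 1) →
        (∀ t : ℝ, 1 < |t| → Φk t = 0) →
        ∀ Φ : ℝ → ℂ, Measurable Φ → (∀ t, Φ t ≠ 0) →
          (∀ t : ℝ, c * (1 + t ^ 2) ^ (-β / 2) ≤ ‖Φ t‖) →
          (∀ t : ℝ, ‖Φ t‖ ≤ C * (1 + t ^ 2) ^ (-β / 2)) →
          ∀ h : ℝ, 0 < h → h ≤ 1 →
            c₁ * h ^ (-(2 * β)) ≤ (∫ w : ℝ, ‖deconvKernel Φk Φ h w‖ ^ 2) ∧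
            (∫ w : ℝ, ‖deconvKernel Φk Φ h w‖ ^ 2) ≤ c₂ * h ^ (-(2 * β)) ∧
            (∫ w : ℝ, ‖deconvKernel Φk Φ h w‖ ^ 2) =
              (2 * Real.pi)⁻¹ * ∫ t : ℝ, ‖Φk t / Φ (-t / h)‖ ^ 2 ∧
            (∫ w : ℝ, ‖deconvKernel Φk Φ h w‖ ^ 2) ≤
              (2 * Real.pi * c ^ 2)⁻¹ *
                ∫ t in Set.Icc (-1 : ℝ) 1, (1 + t ^ 2 / h ^ 2) ^ β ∧
            (2 * Real.pi * C ^ 2)⁻¹ *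
                (∫ t in Set.Icc (-D) D, (1 + t ^ 2 / h ^ 2) ^ β) ≤
              ∫ w : ℝ, ‖deconvKernel Φk Φ h w‖ ^ 2 := by
  obtain ⟨hD0, hD1⟩ := hD
  have hC : 0 < C := hc.trans_le hcC
  have hpi := Real.pi_pos
  refine ⟨(2 * Real.pi * C ^ 2)⁻¹ * (D / 2 * (D ^ 2 / 4) ^ β),
    -- The maximum makes `c₁ ≤ c₂` hold by construction.
    max ((2 * Real.pi * C ^ 2)⁻¹ * (D / 2 * (D ^ 2 / 4) ^ β))
      ((2 * Real.pi * c ^ 2)⁻¹ * (2 * 2 ^ β)), by positivity, le_max_left _ _, ?_⟩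
  intro Φk hΦk hone hle hzero Φ hΦ _ hlo hhi h hh hh1
  have hw : ∀ t : ℝ, 0 < 1 + t ^ 2 / h ^ 2 := fun t ↦ by positivity
  have hwcont : Continuous fun t : ℝ ↦ (1 + t ^ 2 / h ^ 2) ^ β :=
    (by fun_prop : Continuous fun t : ℝ ↦ 1 + t ^ 2 / h ^ 2).rpow_const fun t ↦ .inr hβ.le
  have hwint : ∀ a b : ℝ, IntegrableOn (fun t : ℝ ↦ (1 + t ^ 2 / h ^ 2) ^ β) (Set.Icc a b) :=
    fun a b ↦ hwcont.continuousOn.integrableOn_Icc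
  have hscale : h ^ (-(2 * β)) = ((h ^ 2)⁻¹) ^ β := by
    rw [Real.inv_rpow (by positivity), ← Real.rpow_natCast, ← Real.rpow_mul hh.le,
      ← Real.rpow_neg hh.le]
    norm_num
  set G : ℝ → ℂ := fun t ↦ Φk t / Φ (-t / h) with hG
  have hGmeas : Measurable G := hΦk.div (hΦ.comp (by fun_prop))
  have hGup : ∀ t, ‖G t‖ ^ 2 ≤
      (Set.Icc (-1 : ℝ) 1).indicator (fun t ↦ (c ^ 2)⁻¹ * (1 + t ^ 2 / h ^ 2) ^ β) t := by
    intro t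
    by_cases ht : t ∈ Set.Icc (-1 : ℝ) 1
    · simp only [hG]
      rw [Set.indicator_of_mem ht, norm_div, div_pow, div_eq_mul_inv]
      have h1 : ‖Φk t‖ ^ 2 ≤ 1 := pow_le_one₀ (norm_nonneg _) (hle t)
      exact (mul_le_of_le_one_left (by positivity) h1).trans
        (norm_sq_inv_bounds hc hlo hhi t h).2
    · simp only [hG]
      rw [Set.indicator_of_notMem ht, hzero t (by
        by_contra hcon; exact ht (abs_le.1 (not_lt.1 hcon)))]
      simp
  have hdom : Integrable ((Set.Icc (-1 : ℝ) 1).indicator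
      fun t ↦ (c ^ 2)⁻¹ * (1 + t ^ 2 / h ^ 2) ^ β) :=
    IntegrableOn.integrable_indicator ((hwint _ _).const_mul _) measurableSet_Icc
  have hGsq : Integrable fun t ↦ ‖G t‖ ^ 2 :=
    hdom.mono' (hGmeas.norm.pow_const 2).aestronglyMeasurable
      (.of_forall fun t ↦ by rw [Real.norm_of_nonneg (by positivity)]; exact hGup t)
  have hG2 : MemLp G 2 := (memLp_two_iff_integrable_sq_norm hGmeas.aestronglyMeasurable).2 hGsq
  have hG1 : Integrable G := by
    have hsupp : Function.support G ⊆ Set.Icc (-1 : ℝ) 1 := by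
      intro t ht
      by_contra hcon
      have := hGup t
      rw [Set.indicator_of_notMem hcon] at this
      exact ht (norm_eq_zero.1 (pow_eq_zero_iff two_ne_zero |>.1
        (le_antisymm this (by positivity))))
    rw [← integrableOn_iff_integrable_of_support_subset hsupp]
    exact (hG2.restrict _).integrable (by norm_num)
  have hplan := integral_norm_sq_deconvKernel hG1 hG2
  have hupper : (∫ w : ℝ, ‖deconvKernel Φk Φ h w‖ ^ 2) ≤
      (2 * Real.pi * c ^ 2)⁻¹ * ∫ t in Set.Icc (-1 : ℝ) 1, (1 + t ^ 2 / h ^ 2) ^ β := by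
    rw [hplan, mul_inv (2 * Real.pi), mul_assoc, ← integral_const_mul (c ^ 2)⁻¹,
      ← integral_indicator measurableSet_Icc]
    exact mul_le_mul_of_nonneg_left (integral_mono hGsq hdom hGup) (by positivity)
  have hlower : (2 * Real.pi * C ^ 2)⁻¹ *
      (∫ t in Set.Icc (-D) D, (1 + t ^ 2 / h ^ 2) ^ β) ≤
        ∫ w : ℝ, ‖deconvKernel Φk Φ h w‖ ^ 2 := by
    rw [hplan, mul_inv (2 * Real.pi), mul_assoc, ← integral_const_mul (C ^ 2)⁻¹]
    gcongr
    refine (setIntegral_mono_on ((hwint _ _).const_mul _) hGsq.integrableOn measurableSet_Icc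
      fun t ht ↦ ?_).trans (setIntegral_le_integral hGsq (.of_forall fun t ↦ by positivity))
    simpa [hG, hone t (abs_le.2 ht)] using (norm_sq_inv_bounds hc hlo hhi t h).1
  refine ⟨le_trans ?_ hlower, hupper.trans ?_, hplan, hupper, hlower⟩
  · rw [hscale, mul_assoc _ (_ * _) (_ ^ β), mul_assoc _ (_ ^ β),
      ← Real.mul_rpow (by positivity) (by positivity)]
    gcongr
    -- On `[D/2, D]` drop the summand `1` and use `D² / 4 ≤ t²`.
    calc D / 2 * (D ^ 2 / 4 * (h ^ 2)⁻¹) ^ β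
        = ∫ t in Set.Icc (D / 2) D, (D ^ 2 / 4 * (h ^ 2)⁻¹) ^ β := by
          rw [setIntegral_const, Measure.real, Real.volume_Icc,
            ENNReal.toReal_ofReal (by linarith), smul_eq_mul]
          ring
      _ ≤ ∫ t in Set.Icc (D / 2) D, (1 + t ^ 2 / h ^ 2) ^ β := by
          refine setIntegral_mono_on (by simp) (hwint _ _) measurableSet_Icc fun t ht ↦ ?_
          have : D ^ 2 / 4 ≤ t ^ 2 := by nlinarith [ht.1]
          refine Real.rpow_le_rpow (by positivity) ?_ hβ.le
          calc D ^ 2 / 4 * (h ^ 2)⁻¹ ≤ t ^ 2 * (h ^ 2)⁻¹ := by gcongr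
            _ ≤ 1 + t ^ 2 / h ^ 2 := by rw [div_eq_mul_inv]; linarith
      _ ≤ ∫ t in Set.Icc (-D) D, (1 + t ^ 2 / h ^ 2) ^ β :=
          setIntegral_mono_set (hwint _ _) (.of_forall fun t ↦ (Real.rpow_pos_of_pos (hw t) β).le)
            (Set.Icc_subset_Icc (by linarith) le_rfl).eventuallyLE
  · refine le_trans ?_ (mul_le_mul_of_nonneg_right (le_max_right _ _) (by positivity))
    rw [hscale, mul_assoc _ (_ * _) (_ ^ β), mul_assoc _ (_ ^ β),
      ← Real.mul_rpow (by positivity) (by positivity)]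
    gcongr
    -- Since `h ≤ 1`, the weight on `[-1, 1]` is at most `(2 / h²) ^ β`.
    calc ∫ t in Set.Icc (-1 : ℝ) 1, (1 + t ^ 2 / h ^ 2) ^ β
        ≤ ∫ t in Set.Icc (-1 : ℝ) 1, (2 * (h ^ 2)⁻¹) ^ β := by
          refine setIntegral_mono_on (hwint _ _) (by simp) measurableSet_Icc fun t ht ↦ ?_
          have h1 : t ^ 2 ≤ 1 := (sq_le_one_iff_abs_le_one t).2 (abs_le.2 ht)
          have h2 : 1 ≤ (h ^ 2)⁻¹ := one_le_inv₀ (by positivity) |>.2 (pow_le_one₀ hh.le hh1)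
          refine Real.rpow_le_rpow (hw t).le ?_ hβ.le
          rw [div_eq_mul_inv]
          nlinarith
      _ = 2 * (2 * (h ^ 2)⁻¹) ^ β := by
          rw [setIntegral_const, Measure.real, Real.volume_Icc,
            ENNReal.toReal_ofReal (by norm_num), smul_eq_mul]
          norm_num
end

section
/- Let β > 0, 0 < c ≤ C, C_S > 0, D ∈ (0,1), let Φ_k : ℝ → ℂ be twice continuously differentiable with Φ_k(t) = 1 for |t| ≤ D, |Φ_k(t)| ≤ 1, Φ_k(t) = 0 for |t| > 1, and let Φ : ℝ → ℂ be continuously differentiable, nowhere vanishing, with c(1+t²)^{−β/2} ≤ |Φ(t)| ≤ C(1+t²)^{−β/2} and |Φ'(t)| ≤ C_S(1+t²)^{−(β+1)/2} for all t. For h ∈ (0,1] set K(z;h) = (1/2π)∫_ℝ e^{−itz} Φ_k(t)/Φ(−t/h) dt. Then there is a constant 𝒞 > 0 depending only on c, C_S, β, Φ_k such that for every R ≥ 1 and h ∈ (0,1]: ∫_{−R}^{R} |K(z;h)| dz ≤ (𝒞/h^{β}) (1 + ln R). -/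
/-!
Write `f t = Φk t / Φ (-t / h)`, a `C¹` function supported in `[-1, 1]`, so that
`K(z; h) = (2π)⁻¹ ∫ e^{-itz} f t dt`. Trivially `‖K(z; h)‖ ≤ ∫ ‖f‖`, and one integration by parts gives
`|z| ‖K(z; h)‖ ≤ ∫ ‖f'‖`; adding the two, `‖K(z; h)‖ ≤ (∫ ‖f‖ + ∫ ‖f'‖) / (1 + |z|)`, and
`∫_{-R}^{R} dz / (1 + |z|) = 2 log (1 + R) ≤ 2 (1 + log R)`.

It remains to see that both integrals are `O(h^{-β})`. For `|t| ≤ 1` and `h ≤ 1` the lower bound on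
`‖Φ‖` gives `1 / ‖Φ (-t / h)‖ ≤ c⁻¹ (1 + t² / h²)^{β/2} ≤ c⁻¹ 2^{β/2} h^{-β}`, which handles `f` and the
part of `f'` containing `Φk'`. The other part of `f'` is at most
`C_S c⁻² h⁻¹ (1 + t² / h²)^{(β-1)/2} = C_S c⁻² h^{-β} (h² + t²)^{(β-1)/2}`, and
`(h² + t²)^{(β-1)/2} ≤ |t|^{β-1} + 2^β`, which is integrable on `[-1, 1]` because `β > 0`.
-/

open MeasureTheory

lemma rpow_half_le {β h t : ℝ} (hβ : 0 < β) (h0 : 0 < h) (h1 : h ≤ 1) (ht : |t| ≤ 1) :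
    (1 + (-t / h) ^ 2) ^ (β / 2) ≤ 2 ^ (β / 2) / h ^ β := by
  have ht2 : t ^ 2 ≤ 1 := (sq_le_one_iff_abs_le_one t).2 ht
  have e : (2 : ℝ) ^ (β / 2) / h ^ β = (2 / h ^ 2) ^ (β / 2) := by
    rw [Real.div_rpow (by norm_num) (by positivity), ← Real.rpow_natCast h 2,
      ← Real.rpow_mul h0.le]
    congr 2
    push_cast; ring
  rw [e]
  apply Real.rpow_le_rpow (by positivity) _ (by positivity)
  rw [le_div_iff₀ (by positivity)]
  have : (1 + (-t / h) ^ 2) * h ^ 2 = h ^ 2 + t ^ 2 := by field_simp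
  rw [this]
  nlinarith

/-- The weight coming from differentiating `1 / Φ (-t / h)`. After factoring out `h ^ (-β)`, what
is left is integrable in `t` near `0`, uniformly in `h`; for `β ≥ 1` the constant dominates it,
for `β < 1` the power of `|t|` does. -/
lemma rpow_sub_one_half_le {β h t : ℝ} (hβ : 0 < β) (h0 : 0 < h) (h1 : h ≤ 1) (ht : |t| ≤ 1)
    (ht0 : t ≠ 0) :
    h⁻¹ * (1 + (-t / h) ^ 2) ^ ((β - 1) / 2) ≤ (|t| ^ (β - 1) + 2 ^ β) / h ^ β := by
  have ht2 : t ^ 2 ≤ 1 := (sq_le_one_iff_abs_le_one t).2 ht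
  have hta : 0 < |t| := abs_pos.2 ht0
  have e : h⁻¹ * (1 + (-t / h) ^ 2) ^ ((β - 1) / 2)
      = (h ^ 2 + t ^ 2) ^ ((β - 1) / 2) / h ^ β := by
    have : 1 + (-t / h) ^ 2 = (h ^ 2 + t ^ 2) / h ^ 2 := by field_simp
    rw [this, Real.div_rpow (by positivity) (by positivity), ← Real.rpow_natCast h 2,
      ← Real.rpow_mul h0.le]
    have e2 : ((2 : ℕ) : ℝ) * ((β - 1) / 2) = β - 1 := by push_cast; ring
    rw [e2, Real.rpow_sub_one h0.ne']
    have := (Real.rpow_pos_of_pos h0 β).ne'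
    field_simp
  rw [e]
  apply div_le_div_of_nonneg_right _ (by positivity)
  rcases le_total 1 β with hb | hb
  · have a1 : (h ^ 2 + t ^ 2) ^ ((β - 1) / 2) ≤ (2 : ℝ) ^ ((β - 1) / 2) :=
      Real.rpow_le_rpow (by positivity) (by nlinarith) (by linarith)
    have a2 : (2 : ℝ) ^ ((β - 1) / 2) ≤ 2 ^ β :=
      Real.rpow_le_rpow_of_exponent_le (by norm_num) (by linarith)
    have : 0 ≤ |t| ^ (β - 1) := by positivity
    linarith
  · have a1 : (h ^ 2 + t ^ 2) ^ ((β - 1) / 2) ≤ (|t| ^ 2) ^ ((β - 1) / 2) :=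
      Real.rpow_le_rpow_of_nonpos (by positivity) (by rw [sq_abs]; nlinarith) (by linarith)
    have a2 : (|t| ^ 2) ^ ((β - 1) / 2) = |t| ^ (β - 1) := by
      rw [← Real.rpow_natCast |t| 2, ← Real.rpow_mul hta.le]
      congr 1
      push_cast; ring
    have : (0 : ℝ) ≤ 2 ^ β := by positivity
    linarith

/-- The combined bound `‖f̂(z)‖ = O(1 / (1 + |z|))` for compactly supported `C¹` functions. -/
lemma one_add_abs_mul_norm_fourier_le {f : ℝ → ℂ} (hf : ContDiff ℝ 1 f)
    (hs : HasCompactSupport f) (z : ℝ) :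
    (1 + |z|) * ‖∫ t : ℝ, Complex.exp (-(Complex.I * t * z)) * f t‖
      ≤ (∫ t, ‖f t‖) + ∫ t, ‖deriv f t‖ := by
  have hcd : Continuous (deriv f) := hf.continuous_deriv le_rfl
  have hexp : ∀ t : ℝ, ‖Complex.exp (-(Complex.I * t * z))‖ = 1 := by
    intro t
    rw [show -(Complex.I * t * z) = ((-(t * z) : ℝ) : ℂ) * Complex.I by push_cast; ring]
    exact Complex.norm_exp_ofReal_mul_I _
  have hE : Continuous (fun t : ℝ => Complex.exp (-(Complex.I * t * z))) := by fun_prop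
  have key : ∀ g : ℝ → ℂ,
      ‖∫ t : ℝ, Complex.exp (-(Complex.I * t * z)) * g t‖ ≤ ∫ t, ‖g t‖ := by
    intro g
    refine (norm_integral_le_integral_norm _).trans (le_of_eq ?_)
    simp [hexp]
  have hd : ∀ t : ℝ, HasDerivAt (fun t : ℝ => Complex.exp (-(Complex.I * t * z)))
      (Complex.exp (-(Complex.I * t * z)) * (-(Complex.I * z))) t := by
    intro t
    have h1 : HasDerivAt (fun t : ℝ => -(Complex.I * t * z)) (-(Complex.I * z)) t := by
      have h2 := (((Complex.ofRealCLM.hasDerivAt (x := t)).const_mul Complex.I).mul_const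
        (z : ℂ)).neg
      refine (h2.congr_deriv (by simp)).congr_of_eventuallyEq ?_
      exact Filter.Eventually.of_forall fun y => by simp
    exact h1.cexp
  have ibp := integral_mul_deriv_eq_deriv_mul_of_integrable
    (u := fun t : ℝ => Complex.exp (-(Complex.I * t * z))) (v := f)
    (u' := fun t : ℝ => Complex.exp (-(Complex.I * t * z)) * (-(Complex.I * z))) (v' := deriv f)
    (fun t _ => hd t) (fun t _ => (hf.differentiable one_ne_zero t).hasDerivAt)
    ((hE.mul hcd).integrable_of_hasCompactSupport hs.deriv.mul_left)
    (((hE.mul continuous_const).mul hf.continuous).integrable_of_hasCompactSupport hs.mul_left)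
    ((hE.mul hf.continuous).integrable_of_hasCompactSupport hs.mul_left)
  have e : ∫ t : ℝ, Complex.exp (-(Complex.I * t * z)) * deriv f t
      = (Complex.I * z) * ∫ t : ℝ, Complex.exp (-(Complex.I * t * z)) * f t := by
    rw [ibp, ← integral_const_mul, ← integral_neg]
    congr 1
    ext t
    ring
  have h2 := key (deriv f)
  rw [e, norm_mul, norm_mul, Complex.norm_I, one_mul, Complex.norm_real, Real.norm_eq_abs] at h2
  have h1 := key f
  linarith

lemma integral_inv_one_add_abs_le {R : ℝ} (hR : 1 ≤ R) :
    ∫ z in Set.Icc (-R) R, (1 + |z|)⁻¹ ≤ 2 * (1 + Real.log R) := by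
  have hc : Continuous (fun z : ℝ => (1 + |z|)⁻¹) :=
    (continuous_const.add continuous_abs).inv₀
      (fun z => (add_pos_of_pos_of_nonneg one_pos (abs_nonneg z)).ne')
  have hp : ∫ z in (0 : ℝ)..R, (1 + |z|)⁻¹ = Real.log (1 + R) := by
    have h1 : ∫ z in (0 : ℝ)..R, (1 + |z|)⁻¹ = ∫ z in (0 : ℝ)..R, (1 + z)⁻¹ := by
      apply intervalIntegral.integral_congr
      intro z hz
      rw [Set.uIcc_of_le (by linarith)] at hz
      simp only [abs_of_nonneg hz.1]
    rw [h1, intervalIntegral.integral_comp_add_left (fun z => z⁻¹) 1,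
      integral_inv_of_pos (by norm_num) (by linarith)]
    simp
  have hn : ∫ z in (-R)..(0 : ℝ), (1 + |z|)⁻¹ = ∫ z in (0 : ℝ)..R, (1 + |z|)⁻¹ := by
    have := intervalIntegral.integral_comp_neg (a := 0) (b := R) (fun z : ℝ => (1 + |z|)⁻¹)
    simp only [abs_neg, neg_zero] at this
    exact this.symm
  rw [integral_Icc_eq_integral_Ioc, ← intervalIntegral.integral_of_le (by linarith),
    ← intervalIntegral.integral_add_adjacent_intervals (hc.intervalIntegrable _ 0)
      (hc.intervalIntegrable 0 _), hn, hp]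
  have h2 : Real.log (1 + R) ≤ Real.log (2 * R) := Real.log_le_log (by linarith) (by linarith)
  rw [Real.log_mul (by norm_num) (by linarith)] at h2
  have := Real.log_two_lt_d9
  linarith

/-- Estimate (S3)/(eq:int) of the paper: a logarithmic bound on the L¹-norm of the
deconvolution kernel over a bounded interval:
`∫_{−R}^{R} |K(z;h)| dz ≤ (𝒞/h^β)(1 + ln R)` for all `R ≥ 1`, `h ∈ (0,1]`,
with `𝒞` depending only on `c, C_S, β, Φ_k`. -/
theorem deconvKernel_L1_log_bound
    (β c C C_S D : ℝ) (hβ : 0 < β) (hc : 0 < c) (hcC : c ≤ C) (hCS : 0 < C_S)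
    (hD : D ∈ Set.Ioo (0 : ℝ) 1)
    (Φk : ℝ → ℂ) (hΦk_smooth : ContDiff ℝ 2 Φk)
    (hΦk_one : ∀ t : ℝ, |t| ≤ D → Φk t = 1)
    (hΦk_le : ∀ t : ℝ, ‖Φk t‖ ≤ 1)
    (hΦk_zero : ∀ t : ℝ, 1 < |t| → Φk t = 0) :
    ∃ 𝒞 : ℝ, 0 < 𝒞 ∧
      ∀ Φ : ℝ → ℂ, ContDiff ℝ 1 Φ → (∀ t, Φ t ≠ 0) →
        (∀ t : ℝ, c * (1 + t ^ 2) ^ (-β / 2) ≤ ‖Φ t‖) →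
        (∀ t : ℝ, ‖Φ t‖ ≤ C * (1 + t ^ 2) ^ (-β / 2)) →
        (∀ t : ℝ, ‖deriv Φ t‖ ≤ C_S * (1 + t ^ 2) ^ (-(β + 1) / 2)) →
        ∀ R : ℝ, 1 ≤ R → ∀ h : ℝ, 0 < h → h ≤ 1 →
          (∫ z in Set.Icc (-R) R, ‖deconvKernel Φk Φ h z‖) ≤
            (𝒞 / h ^ β) * (1 + Real.log R) := by
  have hk1 : ContDiff ℝ 1 Φk := hΦk_smooth.of_le (by norm_num)
  obtain ⟨M, hM⟩ := (isCompact_Icc (a := (-1 : ℝ)) (b := 1)).exists_bound_of_continuousOn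
    (hk1.continuous_deriv le_rfl).continuousOn
  have hM0 : 0 ≤ M := (norm_nonneg _).trans (hM 0 (by norm_num))
  -- `g₀ / h ^ β` dominates `‖f‖` and `g₁ / h ^ β` dominates `‖f'‖` on `[-1, 1]`.
  set g₀ : ℝ → ℝ := fun _ => c⁻¹ * 2 ^ (β / 2) with hg₀
  set g₁ : ℝ → ℝ := fun t => M * (c⁻¹ * 2 ^ (β / 2)) + C_S * (c⁻¹) ^ 2 * (|t| ^ (β - 1) + 2 ^ β)
    with hg₁
  have hg₀i : IntegrableOn g₀ (Set.Icc (-1) 1) := continuous_const.integrableOn_Icc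
  have hg₁i : IntegrableOn g₁ (Set.Icc (-1) 1) := by
    have hk : ∀ a : ℝ, IntegrableOn (fun _ : ℝ => a) (Set.Icc (-1) 1) :=
      fun a => continuous_const.integrableOn_Icc
    exact (hk _).add (((integrableOn_abs_rpow hβ).add (hk _)).const_mul _)
  set A : ℝ := (∫ t in Set.Icc (-1 : ℝ) 1, g₀ t) + ∫ t in Set.Icc (-1 : ℝ) 1, g₁ t with hA
  have hA0 : 0 ≤ A := by
    apply add_nonneg <;> apply integral_nonneg <;> intro t <;> simp only [hg₀, hg₁, Pi.zero_apply] <;>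
      positivity
  refine ⟨2 * (A + 1), by linarith, ?_⟩
  intro Φ hΦ hne hlow _ hder R hR h h0 h1
  have hhβ : 0 < h ^ β := Real.rpow_pos_of_pos h0 β
  set f : ℝ → ℂ := fun t => Φk t / Φ (-t / h) with hf
  have hlin : ContDiff ℝ 1 (fun t : ℝ => -t / h) := contDiff_neg.div_const h
  have hfc : ContDiff ℝ 1 f := by
    have hi : ContDiff ℝ 1 (fun t : ℝ => (Φ (-t / h))⁻¹) := (hΦ.comp hlin).inv (fun t => hne _)
    simp only [hf, div_eq_mul_inv (Φk _)]
    exact hk1.mul hi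
  have hf0 : ∀ t, t ∉ Set.Icc (-1 : ℝ) 1 → f t = 0 := by
    intro t ht
    have : Φk t = 0 := hΦk_zero t (by
      by_contra! hcon
      exact ht (abs_le.1 hcon))
    simp [hf, this]
  have hfs : HasCompactSupport f := HasCompactSupport.intro isCompact_Icc hf0
  have hf'0 : ∀ t, t ∉ Set.Icc (-1 : ℝ) 1 → deriv f t = 0 := by
    intro t ht
    have : f =ᶠ[nhds t] fun _ => 0 := by
      filter_upwards [isClosed_Icc.isOpen_compl.mem_nhds ht] with s hs
      exact hf0 s hs
    rw [this.deriv_eq]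
    simp
  have hinv : ∀ s : ℝ, ‖Φ s‖⁻¹ ≤ c⁻¹ * (1 + s ^ 2) ^ (β / 2) := by
    intro s
    have hpos : (0 : ℝ) < 1 + s ^ 2 := by positivity
    have := inv_anti₀ (by positivity) (hlow s)
    rwa [mul_inv, ← Real.rpow_neg hpos.le, show -(-β / 2) = β / 2 by ring] at this
  have hinv' : ∀ t : ℝ, |t| ≤ 1 → ‖Φ (-t / h)‖⁻¹ ≤ c⁻¹ * 2 ^ (β / 2) / h ^ β := by
    intro t ht
    refine (hinv _).trans ?_
    rw [mul_div_assoc]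
    exact mul_le_mul_of_nonneg_left (rpow_half_le hβ h0 h1 ht) (by positivity)
  have b0 : ∀ t ∈ Set.Icc (-1 : ℝ) 1, ‖f t‖ ≤ g₀ t / h ^ β := by
    intro t ht
    simp only [hf, hg₀, norm_div]
    rw [div_eq_mul_inv]
    refine le_trans ?_ (hinv' t (abs_le.2 ht))
    exact mul_le_of_le_one_left (by positivity) (hΦk_le t)
  have hfd : ∀ t, deriv f t = deriv Φk t * (Φ (-t / h))⁻¹
      + Φk t * (deriv Φ (-t / h) * (h : ℂ)⁻¹ * ((Φ (-t / h))⁻¹) ^ 2) := by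
    intro t
    have d1 : HasDerivAt Φk (deriv Φk t) t := (hk1.differentiable one_ne_zero t).hasDerivAt
    have d2 : HasDerivAt Φ (deriv Φ (-t / h)) (-t / h) :=
      (hΦ.differentiable one_ne_zero _).hasDerivAt
    have d3 : HasDerivAt (fun t : ℝ => -t / h) (-1 / h) t := (hasDerivAt_id t).neg.div_const h
    have d4 := d1.div (d2.scomp t d3) (hne _)
    have hn := hne (-t / h)
    have hhc : (h : ℂ) ≠ 0 := by exact_mod_cast h0.ne'
    have := d4.deriv
    refine Eq.trans this ?_
    simp only [Function.comp, Complex.real_smul]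
    push_cast
    field_simp
    ring
  have b1 : ∀ t ∈ Set.Icc (-1 : ℝ) 1, t ≠ 0 → ‖deriv f t‖ ≤ g₁ t / h ^ β := by
    intro t ht ht0
    have hta := abs_le.2 ht
    set s := -t / h with hs
    have hpos : (0 : ℝ) < 1 + s ^ 2 := by positivity
    have i1 : ‖deriv Φk t‖ * ‖Φ s‖⁻¹ ≤ M * (c⁻¹ * 2 ^ (β / 2) / h ^ β) :=
      mul_le_mul (hM t ht) (hinv' t hta) (by positivity) hM0
    have i2 : ‖deriv Φ s‖ * h⁻¹ * (‖Φ s‖⁻¹) ^ 2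
        ≤ C_S * (c⁻¹) ^ 2 * ((|t| ^ (β - 1) + 2 ^ β) / h ^ β) := by
      calc ‖deriv Φ s‖ * h⁻¹ * (‖Φ s‖⁻¹) ^ 2
          ≤ (C_S * (1 + s ^ 2) ^ (-(β + 1) / 2)) * h⁻¹ * (c⁻¹ * (1 + s ^ 2) ^ (β / 2)) ^ 2 := by
            gcongr
            · exact hder s
            · exact hinv s
        _ = C_S * (c⁻¹) ^ 2 * (h⁻¹ * (1 + s ^ 2) ^ ((β - 1) / 2)) := by
            have : (1 + s ^ 2) ^ ((β - 1) / 2)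
                = (1 + s ^ 2) ^ (-(β + 1) / 2) * ((1 + s ^ 2) ^ (β / 2)) ^ 2 := by
              rw [pow_two ((1 + s ^ 2) ^ (β / 2)), ← Real.rpow_add hpos, ← Real.rpow_add hpos]
              congr 1
              ring
            rw [this]
            ring
        _ ≤ _ := mul_le_mul_of_nonneg_left (rpow_sub_one_half_le hβ h0 h1 hta ht0)
            (by positivity)
    rw [hfd]
    refine (norm_add_le _ _).trans ?_
    simp only [norm_mul, norm_inv, norm_pow, Complex.norm_real, Real.norm_eq_abs, abs_of_pos h0]
    have i3 : ‖Φk t‖ * (‖deriv Φ s‖ * h⁻¹ * (‖Φ s‖⁻¹) ^ 2) ≤ ‖deriv Φ s‖ * h⁻¹ * (‖Φ s‖⁻¹) ^ 2 :=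
      mul_le_of_le_one_left (by positivity) (hΦk_le t)
    calc _ ≤ M * (c⁻¹ * 2 ^ (β / 2) / h ^ β)
          + C_S * (c⁻¹) ^ 2 * ((|t| ^ (β - 1) + 2 ^ β) / h ^ β) := add_le_add i1 (i3.trans i2)
      _ = _ := by simp only [hg₁]; ring
  have I0 : ∫ t, ‖f t‖ ≤ (∫ t in Set.Icc (-1 : ℝ) 1, g₀ t) / h ^ β := by
    rw [← setIntegral_eq_integral_of_forall_compl_eq_zero (s := Set.Icc (-1 : ℝ) 1)
      (fun t ht => by rw [hf0 t ht, norm_zero]), ← integral_div]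
    refine integral_mono_of_nonneg (Filter.Eventually.of_forall fun t => norm_nonneg _)
      (hg₀i.div_const _) ?_
    filter_upwards [ae_restrict_mem measurableSet_Icc] with t ht using b0 t ht
  have I1 : ∫ t, ‖deriv f t‖ ≤ (∫ t in Set.Icc (-1 : ℝ) 1, g₁ t) / h ^ β := by
    rw [← setIntegral_eq_integral_of_forall_compl_eq_zero (s := Set.Icc (-1 : ℝ) 1)
      (fun t ht => by rw [hf'0 t ht, norm_zero]), ← integral_div]
    refine integral_mono_of_nonneg (Filter.Eventually.of_forall fun t => norm_nonneg _)
      (hg₁i.div_const _) ?_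
    filter_upwards [ae_restrict_mem measurableSet_Icc,
      ae_restrict_of_ae (Measure.ae_ne volume (0 : ℝ))] with t ht ht0 using b1 t ht ht0
  have hK : ∀ z : ℝ, ‖deconvKernel Φk Φ h z‖ ≤ A / h ^ β * (1 + |z|)⁻¹ := by
    intro z
    have h2 := one_add_abs_mul_norm_fourier_le hfc hfs z
    have hz : 0 < 1 + |z| := by positivity
    have h3 : ‖∫ t : ℝ, Complex.exp (-(Complex.I * t * z)) * f t‖ ≤ A / h ^ β * (1 + |z|)⁻¹ := by
      rw [← div_eq_mul_inv, le_div_iff₀ hz, mul_comm, hA, add_div]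
      linarith
    have hpi : (2 * Real.pi)⁻¹ ≤ 1 := inv_le_one_of_one_le₀ (by linarith [Real.pi_gt_three])
    have hpi0 : 0 ≤ (2 * Real.pi)⁻¹ := by positivity
    rw [deconvKernel, norm_smul, Real.norm_eq_abs, abs_of_nonneg hpi0]
    exact (mul_le_of_le_one_left (norm_nonneg _) hpi).trans h3
  have hci : Continuous (fun z : ℝ => A / h ^ β * (1 + |z|)⁻¹) :=
    continuous_const.mul ((continuous_const.add continuous_abs).inv₀
      (fun z => (add_pos_of_pos_of_nonneg one_pos (abs_nonneg z)).ne'))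
  calc (∫ z in Set.Icc (-R) R, ‖deconvKernel Φk Φ h z‖)
      ≤ ∫ z in Set.Icc (-R) R, A / h ^ β * (1 + |z|)⁻¹ :=
        integral_mono_of_nonneg (Filter.Eventually.of_forall fun z => norm_nonneg _)
          hci.integrableOn_Icc (Filter.Eventually.of_forall hK)
    _ = A / h ^ β * ∫ z in Set.Icc (-R) R, (1 + |z|)⁻¹ := integral_const_mul _ _
    _ ≤ A / h ^ β * (2 * (1 + Real.log R)) :=
        mul_le_mul_of_nonneg_left (integral_inv_one_add_abs_le hR) (by positivity)
    _ ≤ 2 * (A + 1) / h ^ β * (1 + Real.log R) := by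
        have hl := Real.log_nonneg hR
        rw [show A / h ^ β * (2 * (1 + Real.log R)) = 2 * A / h ^ β * (1 + Real.log R) by ring]
        gcongr
        linarith
end

section
/- Let n ∈ ℕ, a_n ∈ (0,1), h ∈ (0,1], β > 0, 0 < c ≤ C, C_S > 0, and let Φ_k, Φ and K(·;h) be as follows: Φ_k : ℝ → ℂ twice continuously differentiable with |Φ_k| ≤ 1 and Φ_k = 0 outside [−1,1]; Φ : ℝ → ℂ continuously differentiable, nowhere vanishing, with c(1+t²)^{−β/2} ≤ |Φ(t)| ≤ C(1+t²)^{−β/2} and |Φ'(t)| ≤ C_S(1+t²)^{−(β+1)/2}; K(w;h) = (1/2π)∫_ℝ e^{−itw}Φ_k(t)/Φ(−t/h)dt. Let w_j = j/(n a_n) for j = −n,…,n and define for s,t ∈ [0,1] the pseudo-distance d(s,t) = ( (h^{2β}/(n a_n h)) Σ_{j=−n}^{n} |K((w_j−s)/h; h) − K((w_j−t)/h; h)|² )^{1/2}. Then there exists a constant C_E > 0 depending only on c, C_S, β, Φ_k (and not on n, a_n, h) such that d(s,t) ≤ C_E |s−t| / (a_n^{1/2} h^{3/2}) for all s,t ∈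 [0,1]. -/
/-!
The Fourier integrand of the deconvolution kernel is supported in `[-1, 1]`, where the lower bound
on `‖Φ‖` gives `1 / ‖Φ (-t / h)‖ ≤ 2 ^ (β / 2) / c * h ^ (-β)` for `0 < h ≤ 1`. Since
`w ↦ exp (-itw)` is `|t|`-Lipschitz, the kernel is Lipschitz in `w` with constant
`2 ^ (β / 2) / c * h ^ (-β)` (lemma `norm_deconvKernel_sub_le`). Applied at two points that are
`|s - t| / h` apart, this bounds each of the `2 n + 1 ≤ 3 n` terms of the sum uniformly in `j`, and
the powers of `h` combine to `h ^ (-3 / 2)` after taking the square root.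
-/

open MeasureTheory

lemma norm_exp_neg_I_mul_sub_le (t u v : ℝ) :
    ‖Complex.exp (-(Complex.I * t * u)) - Complex.exp (-(Complex.I * t * v))‖ ≤
      |t| * |u - v| := by
  have h1 : Complex.exp (-(Complex.I * t * u)) - Complex.exp (-(Complex.I * t * v)) =
      Complex.exp ((-(t * v) : ℝ) * Complex.I) *
        (Complex.exp (Complex.I * ((-(t * (u - v)) : ℝ) : ℂ)) - 1) := by
    rw [mul_sub, ← Complex.exp_add, mul_one]
    congr 2 <;> push_cast <;> ring
  rw [h1, norm_mul, Complex.norm_exp_ofReal_mul_I, one_mul]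
  refine (Real.norm_exp_I_mul_ofReal_sub_one_le).trans ?_
  rw [Real.norm_eq_abs, abs_neg, abs_mul]

/-- On the support `[-1, 1]` of `Φ_k`, the inverse of the characteristic function of the error
is at most of order `h ^ (-β)`. -/
lemma inv_norm_le_of_lower_bound {β c h : ℝ} (hβ : 0 < β) (hc : 0 < c) (hh : 0 < h) (hh1 : h ≤ 1)
    {Φ : ℝ → ℂ} (hΦ : ∀ t : ℝ, c * (1 + t ^ 2) ^ (-β / 2) ≤ ‖Φ t‖) {t : ℝ} (ht : |t| ≤ 1) :
    ‖Φ (-t / h)‖⁻¹ ≤ 2 ^ (β / 2) / c * h ^ (-β) := by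
  have hx : 0 < 1 + (-t / h) ^ 2 := by positivity
  have hx2 : 1 + (-t / h) ^ 2 ≤ 2 * (h ^ 2)⁻¹ := by
    have ht2 : t ^ 2 ≤ 1 := (sq_le_one_iff_abs_le_one t).2 ht
    have hh2 : h ^ 2 ≤ 1 := pow_le_one₀ hh.le hh1
    rw [div_pow, neg_sq, ← div_eq_mul_inv, ← sub_nonneg]
    have : 2 / h ^ 2 - (1 + t ^ 2 / h ^ 2) = (2 - h ^ 2 - t ^ 2) / h ^ 2 := by
      field_simp
      ring
    rw [this]
    apply div_nonneg (by linarith) (by positivity)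
  have hpow : (1 + (-t / h) ^ 2) ^ (β / 2) ≤ 2 ^ (β / 2) * h ^ (-β) := by
    refine (Real.rpow_le_rpow hx.le hx2 (by positivity)).trans_eq ?_
    rw [Real.mul_rpow (by norm_num) (by positivity), Real.inv_rpow (by positivity),
      ← Real.rpow_natCast, ← Real.rpow_mul hh.le, Real.rpow_neg hh.le]
    congr 3
    push_cast
    ring
  calc ‖Φ (-t / h)‖⁻¹ ≤ (c * (1 + (-t / h) ^ 2) ^ (-β / 2))⁻¹ :=
        inv_anti₀ (by positivity) (hΦ _)
    _ = (1 + (-t / h) ^ 2) ^ (β / 2) / c := by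
        rw [neg_div 2 β, Real.rpow_neg hx.le, mul_inv, inv_inv]
        ring
    _ ≤ (2 ^ (β / 2) * h ^ (-β)) / c := by gcongr
    _ = _ := by ring

lemma integrable_deconvKernel_integrand {Φk Φ : ℝ → ℂ} (hΦk : Continuous Φk)
    (hΦk_zero : ∀ t : ℝ, 1 < |t| → Φk t = 0) (hΦ : Continuous Φ) (hΦ0 : ∀ t, Φ t ≠ 0) (h w : ℝ) :
    Integrable fun t : ℝ => Complex.exp (-(Complex.I * t * w)) * (Φk t / Φ (-t / h)) := by
  apply Continuous.integrable_of_hasCompactSupport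
  · have : Continuous fun t : ℝ => Φ (-t / h) := by fun_prop
    exact (by fun_prop : Continuous fun t : ℝ => Complex.exp (-(Complex.I * t * w))).mul
      (hΦk.div this fun t => hΦ0 _)
  · refine HasCompactSupport.intro (isCompact_Icc (a := (-1 : ℝ)) (b := 1)) fun t ht => ?_
    rw [Set.mem_Icc, ← abs_le, not_le] at ht
    simp [hΦk_zero t ht]

/-- The deconvolution kernel is Lipschitz with constant of order `h ^ (-β)`. -/
lemma norm_deconvKernel_sub_le {β c h : ℝ} (hβ : 0 < β) (hc : 0 < c) (hh : 0 < h) (hh1 : h ≤ 1)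
    {Φk Φ : ℝ → ℂ} (hΦk : Continuous Φk) (hΦk_le : ∀ t : ℝ, ‖Φk t‖ ≤ 1)
    (hΦk_zero : ∀ t : ℝ, 1 < |t| → Φk t = 0) (hΦ : Continuous Φ) (hΦ0 : ∀ t, Φ t ≠ 0)
    (hΦ_lower : ∀ t : ℝ, c * (1 + t ^ 2) ^ (-β / 2) ≤ ‖Φ t‖) (u v : ℝ) :
    ‖deconvKernel Φk Φ h u - deconvKernel Φk Φ h v‖ ≤
      2 ^ (β / 2) / c * h ^ (-β) * |u - v| := by
  set M : ℝ := 2 ^ (β / 2) / c * h ^ (-β) * |u - v| with hM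
  have hM0 : 0 ≤ M := by positivity
  unfold deconvKernel
  rw [← smul_sub, ← integral_sub (integrable_deconvKernel_integrand hΦk hΦk_zero hΦ hΦ0 h u)
    (integrable_deconvKernel_integrand hΦk hΦk_zero hΦ hΦ0 h v), norm_smul]
  have hint : Integrable ((Set.Icc (-1 : ℝ) 1).indicator fun _ => M) :=
    (integrable_indicator_iff measurableSet_Icc).2 (by simp)
  have hle := norm_integral_le_of_norm_le (μ := volume)
    (f := fun t : ℝ => Complex.exp (-(Complex.I * t * u)) * (Φk t / Φ (-t / h)) -
      Complex.exp (-(Complex.I * t * v)) * (Φk t / Φ (-t / h))) hint (by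
    refine Filter.Eventually.of_forall fun t => ?_
    by_cases ht : |t| ≤ 1
    · rw [Set.indicator_of_mem (by rwa [Set.mem_Icc, ← abs_le]), ← sub_mul, norm_mul, norm_div,
        div_eq_mul_inv]
      have h1 : ‖Complex.exp (-(Complex.I * t * u)) - Complex.exp (-(Complex.I * t * v))‖ ≤
          |u - v| :=
        (norm_exp_neg_I_mul_sub_le t u v).trans (mul_le_of_le_one_left (abs_nonneg _) ht)
      calc _ ≤ |u - v| * (1 * (2 ^ (β / 2) / c * h ^ (-β))) := by
            gcongr
            · exact hΦk_le t
            · exact inv_norm_le_of_lower_bound hβ hc hh hh1 hΦ_lower ht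
        _ = M := by rw [hM]; ring
    · rw [Set.indicator_of_notMem (by rwa [Set.mem_Icc, ← abs_le])]
      simp [hΦk_zero t (not_le.1 ht)])
  have hval : ∫ t : ℝ, (Set.Icc (-1 : ℝ) 1).indicator (fun _ => M) t = 2 * M := by
    rw [integral_indicator measurableSet_Icc, setIntegral_const]
    simp
    norm_num
  rw [hval] at hle
  have hpi : ‖(2 * Real.pi)⁻¹‖ ≤ 1 / 2 := by
    rw [norm_inv, Real.norm_of_nonneg (by positivity), one_div]
    exact inv_anti₀ (by norm_num) (by linarith [Real.pi_gt_three])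
  calc _ ≤ 1 / 2 * (2 * M) := by gcongr
    _ = M := by ring

/-- The Lipschitz estimate (dist) used to prove Lemma 6 of the paper: the
standard-deviation pseudometric
`d(s,t) = ((h^{2β}/(n aₙ h)) Σ_{j=−n}^{n} |K((w_j−s)/h;h) − K((w_j−t)/h;h)|²)^{1/2}`
of the Gaussian approximating process on the design `w_j = j/(n aₙ)` satisfies
`d(s,t) ≤ C_E |s−t| / (aₙ^{1/2} h^{3/2})` with `C_E` depending only on
`c, C_S, β, Φ_k`. -/
theorem gaussian_process_pseudometric_lipschitz
    (β c C C_S : ℝ) (hβ : 0 < β) (hc : 0 < c) (hcC : c ≤ C) (hCS : 0 < C_S)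
    (Φk : ℝ → ℂ) (hΦk_smooth : ContDiff ℝ 2 Φk)
    (hΦk_le : ∀ t : ℝ, ‖Φk t‖ ≤ 1)
    (hΦk_zero : ∀ t : ℝ, 1 < |t| → Φk t = 0) :
    ∃ C_E : ℝ, 0 < C_E ∧
      ∀ Φ : ℝ → ℂ, ContDiff ℝ 1 Φ → (∀ t, Φ t ≠ 0) →
        (∀ t : ℝ, c * (1 + t ^ 2) ^ (-β / 2) ≤ ‖Φ t‖) →
        (∀ t : ℝ, ‖Φ t‖ ≤ C * (1 + t ^ 2) ^ (-β / 2)) →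
        (∀ t : ℝ, ‖deriv Φ t‖ ≤ C_S * (1 + t ^ 2) ^ (-(β + 1) / 2)) →
        ∀ n : ℕ, 0 < n → ∀ aₙ : ℝ, 0 < aₙ → aₙ < 1 → ∀ h : ℝ, 0 < h → h ≤ 1 →
          ∀ s ∈ Set.Icc (0 : ℝ) 1, ∀ t ∈ Set.Icc (0 : ℝ) 1,
            Real.sqrt ((h ^ (2 * β) / (n * aₙ * h)) *
                ∑ j ∈ Finset.Icc (-(n : ℤ)) (n : ℤ),
                  ‖deconvKernel Φk Φ h (((j : ℝ) / (n * aₙ) - s) / h) -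
                      deconvKernel Φk Φ h (((j : ℝ) / (n * aₙ) - t) / h)‖ ^ 2) ≤
              C_E * |s - t| / (Real.sqrt aₙ * h ^ ((3 : ℝ) / 2)) := by
  refine ⟨Real.sqrt 3 * (2 ^ (β / 2) / c), by positivity, ?_⟩
  intro Φ hΦ hΦ0 hΦl _ _ n hn a ha _ h hh hh1 s _ t _
  set D : ℝ := 2 ^ (β / 2) / c with hD
  have hD0 : 0 < D := by positivity
  have hn0 : (1 : ℝ) ≤ n := by exact_mod_cast hn
  apply Real.sqrt_le_iff.2
  refine ⟨by positivity, ?_⟩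
  have hterm : ∀ j ∈ Finset.Icc (-(n : ℤ)) (n : ℤ),
      ‖deconvKernel Φk Φ h (((j : ℝ) / (n * a) - s) / h) -
        deconvKernel Φk Φ h (((j : ℝ) / (n * a) - t) / h)‖ ^ 2 ≤
      (D * h ^ (-β) * (|s - t| / h)) ^ 2 := by
    intro j _
    refine pow_le_pow_left₀ (norm_nonneg _) ?_ 2
    refine (norm_deconvKernel_sub_le hβ hc hh hh1 hΦk_smooth.continuous hΦk_le hΦk_zero
      hΦ.continuous hΦ0 hΦl _ _).trans_eq ?_
    rw [← sub_div, abs_div, abs_of_pos hh, sub_sub_sub_cancel_left, abs_sub_comm t s]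
  have hsum := Finset.sum_le_card_nsmul _ _ _ hterm
  have hcard : ((Finset.Icc (-(n : ℤ)) (n : ℤ)).card : ℝ) ≤ 3 * n := by
    have : (Finset.Icc (-(n : ℤ)) (n : ℤ)).card ≤ 3 * n := by
      rw [Int.card_Icc]
      omega
    exact_mod_cast this
  rw [nsmul_eq_mul] at hsum
  have hpow : h ^ (2 * β) * (h ^ (-β)) ^ 2 = 1 := by
    rw [← Real.rpow_natCast, ← Real.rpow_mul hh.le, ← Real.rpow_add hh]
    convert Real.rpow_zero h using 2
    push_cast
    ring
  have hpow3 : (h ^ ((3 : ℝ) / 2)) ^ 2 = h ^ 3 := by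
    rw [← Real.rpow_natCast, ← Real.rpow_mul hh.le, ← Real.rpow_natCast]
    norm_num
  calc _ ≤ h ^ (2 * β) / (n * a * h) * (3 * n * (D * h ^ (-β) * (|s - t| / h)) ^ 2) := by
        gcongr
        exact hsum.trans (by gcongr)
    _ = (h ^ (2 * β) * (h ^ (-β)) ^ 2) * (3 * D ^ 2 * |s - t| ^ 2 / (a * h ^ 3)) := by
        field_simp
    _ = _ := by
        rw [hpow, one_mul, div_pow (Real.sqrt 3 * D * |s - t|), mul_pow, mul_pow, mul_pow, hpow3,
          Real.sq_sqrt (by norm_num), Real.sq_sqrt ha.le]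
end

section
/- Let m > 1/2 be a real number, let φ : ℝ → ℂ be measurable with B² := ∫_ℝ (1+z²)^m ‖φ(z)‖² dz < ∞, let D ∈ (0,1), h ∈ (0,1], and let ψ : ℝ → ℂ satisfy ψ(t) = 1 for all |t| ≤ D and ‖ψ(t)‖ ≤ 1 for all t. Then for every x ∈ ℝ: ‖∫_ℝ e^{ixz} φ(z)(ψ(hz) − 1) dz‖ ≤ 2 ∫_{|z| > D/h} ‖φ(z)‖ dz ≤ 2B (2/(2m−1))^{1/2} (h/D)^{m − 1/2}. In particular the left-hand side is O(h^{m−1/2}) uniformly in x as h → 0. -/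
open MeasureTheory

/-!
On `|z| ≤ D / h` the factor `ψ (h z) - 1` vanishes, and elsewhere it has norm at most `2`, so the
oscillatory integral is at most `2 ∫_{|z| > D/h} ‖φ‖`. On that tail
`‖φ z‖ ≤ ((1 + z²)^(m/2) ‖φ z‖) · |z|^(-m)`, and Cauchy–Schwarz bounds the integral of the product
by `B` times the square root of
`∫_{|z| > D/h} |z|^(-2m) dz = 2 / (2m - 1) · (D/h)^(1 - 2m)`.
The condition `m > 1/2` is what makes the last integral finite.
-/

theorem setIntegral_abs_rpow_tail {m a : ℝ} (hm : 1 / 2 < m) (ha : 0 < a) :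
    ∫ z in {z : ℝ | a < |z|}, (|z| ^ (-m)) ^ 2 = 2 / (2 * m - 1) * a ^ (1 - 2 * m) := by
  have hS : MeasurableSet {z : ℝ | a < |z|} := measurableSet_lt measurable_const measurable_abs
  rw [← integral_indicator hS]
  have e : ({z : ℝ | a < |z|}.indicator fun z => (|z| ^ (-m)) ^ 2) =
      fun z => (Set.Ioi a).indicator (fun t : ℝ => t ^ (-(2 * m))) |z| := by
    funext z
    by_cases hz : a < |z|
    · rw [Set.indicator_of_mem (show z ∈ {z : ℝ | a < |z|} from hz),
        Set.indicator_of_mem (show |z| ∈ Set.Ioi a from hz), ← Real.rpow_mul_natCast (abs_nonneg z)]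
      congr 1
      push_cast
      ring
    · rw [Set.indicator_of_notMem (show z ∉ {z : ℝ | a < |z|} from hz),
        Set.indicator_of_notMem (show |z| ∉ Set.Ioi a from hz)]
  rw [e, integral_comp_abs (f := (Set.Ioi a).indicator (fun t : ℝ => t ^ (-(2 * m)))),
    setIntegral_indicator measurableSet_Ioi, Set.Ioi_inter_Ioi, max_eq_right ha.le,
    integral_Ioi_rpow_of_lt (by linarith) ha]
  have h1 : 2 * m - 1 ≠ 0 := by linarith
  rw [show -(2 * m) + 1 = -(2 * m - 1) by ring, show 1 - 2 * m = -(2 * m - 1) by ring, neg_div_neg_eq]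
  ring

/-- Cauchy–Schwarz on the tail, together with the integrability without which the bound on the
Bochner integral would carry no information. -/
theorem tail_integrable_and_le {m B a : ℝ} (hm : 1 / 2 < m) (hB : 0 ≤ B) (ha : 0 < a)
    {φ : ℝ → ℂ} (hφ : Measurable φ)
    (hint : Integrable (fun z : ℝ => (1 + z ^ 2) ^ m * ‖φ z‖ ^ 2))
    (hB2 : (∫ z : ℝ, (1 + z ^ 2) ^ m * ‖φ z‖ ^ 2) = B ^ 2) :
    IntegrableOn (fun z => ‖φ z‖) {z : ℝ | a < |z|} ∧
      ∫ z in {z : ℝ | a < |z|}, ‖φ z‖ ≤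
        B * Real.sqrt (2 / (2 * m - 1) * a ^ (1 - 2 * m)) := by
  have hS : MeasurableSet {z : ℝ | a < |z|} := measurableSet_lt measurable_const measurable_abs
  set S : Set ℝ := {z : ℝ | a < |z|} with hSdef
  set f : ℝ → ℝ := fun z => (1 + z ^ 2) ^ (m / 2) * ‖φ z‖ with hf
  set g : ℝ → ℝ := fun z => |z| ^ (-m) with hg
  have hfm : Measurable f := by fun_prop
  have hgm : Measurable g := measurable_abs.pow_const _
  have hf0 : ∀ z, 0 ≤ f z := fun z => by positivity
  have hg0 : ∀ z, 0 ≤ g z := fun z => by positivity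
  have hf2 : ∀ z, f z ^ 2 = (1 + z ^ 2) ^ m * ‖φ z‖ ^ 2 := by
    intro z
    rw [hf, mul_pow, ← Real.rpow_mul_natCast (by positivity)]
    congr 2
    push_cast
    ring
  have hfi : Integrable (fun z => f z ^ 2) := by simpa only [hf2] using hint
  have hgint : ∫ z in S, g z ^ 2 = 2 / (2 * m - 1) * a ^ (1 - 2 * m) :=
    setIntegral_abs_rpow_tail hm ha
  have hgpos : 0 < 2 / (2 * m - 1) * a ^ (1 - 2 * m) :=
    mul_pos (div_pos two_pos (by linarith)) (Real.rpow_pos_of_pos ha _)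
  have hfL : MemLp f 2 (volume.restrict S) :=
    (memLp_two_iff_integrable_sq hfm.aestronglyMeasurable).2 hfi.integrableOn
  -- A nonzero Bochner integral certifies integrability.
  have hgL : MemLp g 2 (volume.restrict S) :=
    (memLp_two_iff_integrable_sq hgm.aestronglyMeasurable).2
      (.of_integral_ne_zero (by rw [hgint]; exact hgpos.ne'))
  have hfg : IntegrableOn (fun z => f z * g z) S := hfL.integrable_mul hgL
  have hle : ∀ z ∈ S, ‖φ z‖ ≤ f z * g z := by
    intro z hz
    have hz0 : 0 < |z| := ha.trans hz
    have h1 : |z| ^ m ≤ (1 + z ^ 2) ^ (m / 2) := by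
      calc |z| ^ m = (|z| ^ 2) ^ (m / 2) := by
            rw [← Real.rpow_natCast_mul hz0.le]
            congr 1
            push_cast
            ring
        _ ≤ (1 + z ^ 2) ^ (m / 2) := by
            rw [sq_abs]
            exact Real.rpow_le_rpow (by positivity) (by linarith) (by linarith)
    calc ‖φ z‖ = |z| ^ m * |z| ^ (-m) * ‖φ z‖ := by
          rw [← Real.rpow_add hz0, add_neg_cancel, Real.rpow_zero, one_mul]
      _ ≤ (1 + z ^ 2) ^ (m / 2) * |z| ^ (-m) * ‖φ z‖ := by gcongr
      _ = f z * g z := by simp only [hf, hg]; ring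
  have hφi : IntegrableOn (fun z => ‖φ z‖) S :=
    hfg.mono' hφ.norm.aestronglyMeasurable
      ((ae_restrict_mem hS).mono fun z hz => by simpa using hle z hz)
  refine ⟨hφi, (setIntegral_mono_on hφi hfg hS hle).trans ?_⟩
  have hCS := integral_mul_le_Lp_mul_Lq_of_nonneg (μ := volume.restrict S)
    Real.HolderConjugate.two_two (f := f) (g := g)
    (.of_forall hf0) (.of_forall hg0) (by simpa using hfL) (by simpa using hgL)
  simp only [Real.rpow_two, ← Real.sqrt_eq_rpow, hgint] at hCS
  refine hCS.trans (mul_le_mul_of_nonneg_right ?_ (Real.sqrt_nonneg _))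
  refine Real.sqrt_le_iff.2 ⟨hB, ?_⟩
  rw [← hB2]
  simp only [← hf2]
  exact setIntegral_le_integral hfi (.of_forall fun z => sq_nonneg (f z))

/-- The spectral cut-off bias bound `R_n(x) = O(h^{m−1/2})` in the proof of
Lemma 5(i) of the paper: if `∫ (1+z²)^m ‖φ z‖² dz = B²` with `m > 1/2` and `ψ` equals
`1` on `[−D,D]` with `‖ψ‖ ≤ 1`, then for every `x`,
`‖∫ e^{ixz} φ(z)(ψ(hz) − 1) dz‖ ≤ 2∫_{|z|>D/h}‖φ(z)‖dz
  ≤ 2B (2/(2m−1))^{1/2} (h/D)^{m−1/2}`. -/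
theorem spectral_cutoff_bias_bound
    (m B : ℝ) (hm : 1 / 2 < m) (hB : 0 ≤ B)
    (φ : ℝ → ℂ) (hφ : Measurable φ)
    (hint : Integrable (fun z : ℝ => (1 + z ^ 2) ^ m * ‖φ z‖ ^ 2))
    (hB2 : (∫ z : ℝ, (1 + z ^ 2) ^ m * ‖φ z‖ ^ 2) = B ^ 2)
    (D : ℝ) (hD : D ∈ Set.Ioo (0 : ℝ) 1) (h : ℝ) (hh : 0 < h) (hh1 : h ≤ 1)
    (ψ : ℝ → ℂ) (hψ_one : ∀ t : ℝ, |t| ≤ D → ψ t = 1)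
    (hψ_le : ∀ t : ℝ, ‖ψ t‖ ≤ 1) :
    ∀ x : ℝ,
      ‖∫ z : ℝ, Complex.exp (Complex.I * x * z) * φ z * (ψ (h * z) - 1)‖ ≤
        2 * (∫ z in {z : ℝ | D / h < |z|}, ‖φ z‖) ∧
      2 * (∫ z in {z : ℝ | D / h < |z|}, ‖φ z‖) ≤
        2 * B * Real.sqrt (2 / (2 * m - 1)) * (h / D) ^ (m - 1 / 2) := by
  obtain ⟨hD0, -⟩ := hD
  have ha : 0 < D / h := div_pos hD0 hh
  obtain ⟨hφi, hφle⟩ := tail_integrable_and_le hm hB ha hφ hint hB2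
  have hS : MeasurableSet {z : ℝ | D / h < |z|} :=
    measurableSet_lt measurable_const measurable_abs
  intro x
  constructor
  · rw [← integral_const_mul, ← integral_indicator hS]
    -- `ψ` need not be measurable: only the dominating function has to be integrable.
    refine norm_integral_le_of_norm_le ((integrable_indicator_iff hS).2 (hφi.const_mul 2))
      (.of_forall fun z => ?_)
    by_cases hz : D / h < |z|
    · rw [Set.indicator_of_mem (show z ∈ {z : ℝ | D / h < |z|} from hz), norm_mul, norm_mul]
      have h1 : ‖Complex.exp (Complex.I * x * z)‖ = 1 := by
        rw [show Complex.I * x * z = ((x * z : ℝ) : ℂ) * Complex.I by push_cast; ring,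
          Complex.norm_exp_ofReal_mul_I]
      have h2 : ‖ψ (h * z) - 1‖ ≤ 2 := by
        refine (norm_sub_le _ _).trans ?_
        rw [norm_one]
        linarith [hψ_le (h * z)]
      rw [h1, one_mul, mul_comm]
      gcongr
    · have hz' : |h * z| ≤ D := by
        rw [abs_mul, abs_of_pos hh, mul_comm]
        exact (le_div_iff₀ hh).1 (not_lt.1 hz)
      rw [Set.indicator_of_notMem (show z ∉ {z : ℝ | D / h < |z|} from hz), hψ_one _ hz']
      simp
  · have hs : Real.sqrt (2 / (2 * m - 1) * (D / h) ^ (1 - 2 * m)) =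
        Real.sqrt (2 / (2 * m - 1)) * (h / D) ^ (m - 1 / 2) := by
      rw [Real.sqrt_mul (div_nonneg two_pos.le (by linarith)), Real.sqrt_eq_rpow ((D / h) ^ _),
        ← Real.rpow_mul ha.le, ← inv_div D h, Real.inv_rpow ha.le, ← Real.rpow_neg ha.le]
      congr 2
      ring
    rw [hs] at hφle
    linarith
end
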